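/- arXiv:1805.08188 — 3 statements merged into one kernel-verified Lean document; each statement's English description precedes it below -/
import Mathlib

section
/- Let H be a complex separable infinite-dimensional Hilbert space and 𝒯 = (T_1, …, T_n) an n-tuple of bounded operators on H. Then the union, over all n-tuples 𝒦 = (K_1, …, K_n) of compact operators on H, of the sets D_const(𝒯 + 𝒦) equals W_e(𝒯). That is, λ ∈ ℂ^n belongs to W_e(𝒯) if and only if there exist compact operators K_1, …, K_n on H and an orthonormal basis (u_k)_{k≥1} of H with ⟨(T_j + K_j) u_k, u_k⟩ = λ_j for all k ≥ 1 and all j = 1, …, n. -/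
open Filter Metric
open scoped ComplexInnerProductSpace

/-- The joint essential numerical range of a tuple of bounded operators. -/
def jointEssNumRange {H : Type*} [NormedAddCommGroup H] [InnerProductSpace ℂ H]
    {n : ℕ} (T : Fin n → H →L[ℂ] H) : Set (Fin n → ℂ) :=
  {lam | ∃ x : ℕ → H, Orthonormal ℂ x ∧
    ∀ j, Tendsto (fun k => ⟪(T j) (x k), x k⟫) atTop (nhds (lam j))}

/-!
Let `x` be an orthonormal sequence along which the quadratic forms of the tuple tend to `λ`, and
extend it by an orthonormal family `y` to an orthonormal basis. As `x` is weakly null, a sum of `N`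
sufficiently spread out vectors `x_k`, divided by `√N`, has form values as close to `λ` as we like.
Choose such block vectors `s_i`, one for each `y_i`, over disjoint blocks whose sizes tend to
infinity, with `N_i` the size of the block of `s_i`. The reflection that exchanges `y_i` and `s_i`
for all `i` moves a vector `x_k` of the `i`-th block by at most `2 / √N_i`, and it sends the `y_i`,
over whose form values we have no control, to the `s_i`. Hence the diagonal of the tuple in the
reflected basis tends to `λ`, and compact operators diagonal in this basis remove the remaining null
sequence. The converse holds because a compact operator sends orthonormal sequences to null
sequences.
-/

open Set Submodule
open scoped Topology InnerProductSpace

theorem tendsto_cofinite_of_sum {α β γ : Type*} {l : Filter γ} {f : α ⊕ β → γ}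
    (hl : Tendsto (fun a => f (.inl a)) cofinite l)
    (hr : Tendsto (fun b => f (.inr b)) cofinite l) : Tendsto f cofinite l := by
  intro U hU
  have hfin := ((mem_cofinite.1 (hl hU)).image Sum.inl).union
    ((mem_cofinite.1 (hr hU)).image Sum.inr)
  refine mem_cofinite.2 (hfin.subset ?_)
  rintro (a | b) h
  exacts [.inl ⟨a, h, rfl⟩, .inr ⟨b, h, rfl⟩]

theorem tendsto_zero_cofinite_of_le_on_blocks {κ ι E : Type*} [NormedAddCommGroup E] {f : κ → E}
    {B : ι → Finset κ} {g : ι → ℝ} (hg : Tendsto g cofinite (𝓝 0))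
    (hf : ∀ k, f k ≠ 0 → ∃ i, k ∈ B i ∧ ‖f k‖ ≤ g i) : Tendsto f cofinite (𝓝 0) := by
  refine Metric.tendsto_nhds.2 fun ε hε => eventually_cofinite.2 ?_
  have hbad : {i | ¬ g i < ε}.Finite := eventually_cofinite.1 (hg.eventually_lt_const hε)
  refine (hbad.biUnion fun i _ => (B i).finite_toSet).subset fun k hk => ?_
  rw [mem_ofPred_eq, dist_zero_right, not_lt] at hk
  obtain ⟨i, hki, hle⟩ := hf k (norm_pos_iff.1 (hε.trans_le hk))
  exact mem_biUnion (not_lt.2 (hk.trans hle)) hki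

section InnerProduct

variable {𝕜 H ι κ J : Type*} [RCLike 𝕜] [NormedAddCommGroup H] [InnerProductSpace 𝕜 H]

section Orthonormal

theorem norm_sq_sum_smul_of_orthonormal {v : ι → H} (hv : Orthonormal 𝕜 v) (c : ι → 𝕜)
    (s : Finset ι) : ‖∑ i ∈ s, c i • v i‖ ^ 2 = ∑ i ∈ s, ‖c i‖ ^ 2 := by
  simpa using hv.orthogonalFamily.norm_sum c s

theorem orthonormal_sumElim {v : ι → H} {w : κ → H} (hv : Orthonormal 𝕜 v) (hw : Orthonormal 𝕜 w)
    (hvw : ∀ i k, ⟪v i, w k⟫_𝕜 = 0) : Orthonormal 𝕜 (Sum.elim v w) := by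
  refine ⟨Sum.rec hv.1 hw.1, ?_⟩
  rintro (i | i) (k | k) hne
  · exact hv.2 (by simpa using hne)
  · exact hvw i k
  · exact inner_eq_zero_symm.1 (hvw k i)
  · exact hw.2 (by simpa using hne)

theorem countable_of_orthonormal [TopologicalSpace.SeparableSpace H] {v : ι → H}
    (hv : Orthonormal 𝕜 v) : Countable ι := by
  refine Pairwise.countable_of_isOpen_disjoint (s := fun i => ball (v i) (1 / 2))
    (fun i j hij => ball_disjoint_ball ?_) (fun _ => isOpen_ball) fun i => ⟨v i, by simp⟩
  have hsq : ‖v i - v j‖ ^ 2 = 2 := by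
    rw [norm_sub_sq (𝕜 := 𝕜), hv.2 hij, hv.1, hv.1]
    norm_num
  rw [dist_eq_norm]
  nlinarith [norm_nonneg (v i - v j)]

theorem exists_hilbertBasis_sum_extension [CompleteSpace H] {x : κ → H} (hx : Orthonormal 𝕜 x) :
    ∃ (s : Set (span 𝕜 (range x))ᗮ) (b : HilbertBasis (κ ⊕ s) 𝕜 H), ∀ k, b (.inl k) = x k := by
  set V := (span 𝕜 (range x))ᗮ
  obtain ⟨s, c, -⟩ := exists_hilbertBasis 𝕜 V
  have hxc : Orthonormal 𝕜 (Sum.elim x fun i => (c i : H)) :=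
    orthonormal_sumElim hx (c.orthonormal.comp_linearIsometry V.subtypeₗᵢ) fun k i =>
      (mem_orthogonal _ _).1 (c i).2 _ (subset_span (mem_range_self k))
  refine ⟨s, .mkOfOrthogonalEqBot hxc (eq_bot_iff.2 fun v hv => ?_), fun k => by simp⟩
  have hv0 : ∀ i, ⟪Sum.elim x (fun i => (c i : H)) i, v⟫_𝕜 = 0 := fun i =>
    (mem_orthogonal _ _).1 hv _ (subset_span (mem_range_self i))
  have hvV : v ∈ V := by
    refine orthogonal_le (span_mono ?_) hv
    rintro _ ⟨k, rfl⟩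
    exact ⟨.inl k, rfl⟩
  have hrepr : c.repr ⟨v, hvV⟩ = 0 := by
    ext i
    simpa [c.repr_apply_apply] using hv0 (.inr i)
  simpa using hrepr

theorem tendsto_apply_orthonormal_cofinite [CompleteSpace H] {x : ι → H} (hx : Orthonormal 𝕜 x)
    (f : StrongDual 𝕜 H) : Tendsto (fun i => f (x i)) cofinite (𝓝 0) := by
  obtain ⟨v, rfl⟩ := (InnerProductSpace.toDual 𝕜 H).surjective f
  refine tendsto_zero_iff_norm_tendsto_zero.2 ?_
  simpa [norm_inner_symm v] using (hx.inner_products_summable v).tendsto_cofinite_zero.sqrt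

theorem tendsto_compact_apply_orthonormal_cofinite [CompleteSpace H] {F : Type*}
    [NormedAddCommGroup F] [NormedSpace 𝕜 F] {x : ι → H} (hx : Orthonormal 𝕜 x) {K : H →L[𝕜] F}
    (hK : IsCompactOperator K) : Tendsto (fun i => K (x i)) cofinite (𝓝 0) := by
  obtain ⟨S, hS, hsub⟩ := hK.image_closedBall_subset_compact (f := (K : H →ₗ[𝕜] F)) 1
  refine hS.tendsto_nhds_of_unique_mapClusterPt
    (.of_forall fun i => hsub ⟨x i, by simp [hx.1], rfl⟩) fun y _ hy => ?_
  refine SeparatingDual.eq_zero_of_forall_dual_eq_zero (R := 𝕜) fun f => ?_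
  have hfy : MapClusterPt (f y) cofinite fun i => f (K (x i)) :=
    hy.continuousAt_comp f.continuous.continuousAt
  exact eq_of_nhds_neBot (ClusterPt.mono hfy (tendsto_apply_orthonormal_cofinite hx (f ∘L K)))

end Orthonormal

section Diagonal
open InnerProductSpace

theorem norm_sum_smul_rankOne_le_of_orthonormal {u : ι → H} (hu : Orthonormal 𝕜 u) {c : ι → 𝕜}
    {s : Finset ι} {ε : ℝ} (hε : 0 ≤ ε) (hc : ∀ i ∈ s, ‖c i‖ ≤ ε) :
    ‖∑ i ∈ s, c i • rankOne 𝕜 (u i) (u i)‖ ≤ ε := by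
  refine ContinuousLinearMap.opNorm_le_bound _ hε fun v => le_of_sq_le_sq ?_ (by positivity)
  have happly : (∑ i ∈ s, c i • rankOne 𝕜 (u i) (u i)) v = ∑ i ∈ s, (c i * ⟪u i, v⟫_𝕜) • u i := by
    simp [mul_smul]
  calc ‖(∑ i ∈ s, c i • rankOne 𝕜 (u i) (u i)) v‖ ^ 2
      = ∑ i ∈ s, ‖c i‖ ^ 2 * ‖⟪u i, v⟫_𝕜‖ ^ 2 := by
        simp_rw [happly, norm_sq_sum_smul_of_orthonormal hu, norm_mul, mul_pow]
    _ ≤ ∑ i ∈ s, ε ^ 2 * ‖⟪u i, v⟫_𝕜‖ ^ 2 := by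
        gcongr with i hi
        exact hc i hi
    _ ≤ (ε * ‖v‖) ^ 2 := by
        rw [← Finset.mul_sum, mul_pow]
        gcongr
        exact hu.sum_inner_products_le v

theorem summable_smul_rankOne_of_orthonormal [CompleteSpace H] {u : ι → H} (hu : Orthonormal 𝕜 u)
    {c : ι → 𝕜} (hc : Tendsto c cofinite (𝓝 0)) :
    Summable fun i => c i • rankOne 𝕜 (u i) (u i) := by
  refine summable_iff_vanishing_norm.2 fun ε hε => ?_
  have hbad : {i | ¬ ‖c i‖ < ε / 2}.Finite :=
    eventually_cofinite.1 (hc.norm.eventually_lt_const (by simpa using half_pos hε))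
  refine ⟨hbad.toFinset, fun s hs => ?_⟩
  refine (norm_sum_smul_rankOne_le_of_orthonormal hu (half_pos hε).le fun i hi => ?_).trans_lt
    (half_lt_self hε)
  have hsmall : ‖c i‖ < ε / 2 := by simpa using Finset.disjoint_left.1 hs hi
  exact hsmall.le

theorem isCompactOperator_rankOne {F : Type*} [NormedAddCommGroup F] [NormedSpace 𝕜 F] (x : F)
    (y : H) : IsCompactOperator (rankOne 𝕜 x y) := by
  rw [rankOne_def']
  exact (isCompactOperator_of_locallyCompactSpace_dom (innerSL 𝕜 y)).clm_comp
    (ContinuousLinearMap.toSpanSingleton 𝕜 x)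

theorem exists_isCompactOperator_diagonal [CompleteSpace H] {u : ι → H} (hu : Orthonormal 𝕜 u)
    {c : ι → 𝕜} (hc : Tendsto c cofinite (𝓝 0)) :
    ∃ K : H →L[𝕜] H, IsCompactOperator K ∧ ∀ i, K (u i) = c i • u i := by
  have hsum := summable_smul_rankOne_of_orthonormal hu hc
  refine ⟨_, isCompactOperator_of_tendsto hsum.hasSum (.of_forall fun s => ?_), fun i => ?_⟩
  · exact (compactOperator (RingHom.id 𝕜) H H).sum_mem fun i _ =>
      (isCompactOperator_rankOne (u i) (u i)).smul (c i)
  · have happly := hsum.hasSum.mapL (ContinuousLinearMap.apply 𝕜 H (u i))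
    have hsingle := hasSum_single (f := fun k => (c k • rankOne 𝕜 (u k) (u k)) (u i)) i
      fun k hk => by simp [hu.2 hk]
    simpa [hu.1] using happly.unique hsingle

end Diagonal

section Form

/-- The values at `v` of the quadratic forms of the tuple `T`; for a unit vector `v` this is a point
of the joint numerical range of `T`. -/
def jointQuadForm (T : J → H →L[𝕜] H) (v : H) : J → 𝕜 := fun j => ⟪T j v, v⟫_𝕜

theorem jointQuadForm_smul (T : J → H →L[𝕜] H) (a : 𝕜) (v : H) :
    jointQuadForm T (a • v) = (‖a‖ ^ 2 : 𝕜) • jointQuadForm T v := by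
  ext j
  simp only [jointQuadForm, map_smul, inner_smul_left, inner_smul_right, Pi.smul_apply, smul_eq_mul,
    ← RCLike.conj_mul]
  ring

theorem norm_inner_apply_sub_inner_apply_le (T : H →L[𝕜] H) (v w : H) :
    ‖⟪T w, w⟫_𝕜 - ⟪T v, v⟫_𝕜‖ ≤ ‖T‖ * (‖w‖ + ‖v‖) * ‖w - v‖ := by
  have hsplit : ⟪T w, w⟫_𝕜 - ⟪T v, v⟫_𝕜 = ⟪T (w - v), w⟫_𝕜 + ⟪T v, w - v⟫_𝕜 := by
    simp only [map_sub, inner_sub_left, inner_sub_right]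
    ring
  calc ‖⟪T w, w⟫_𝕜 - ⟪T v, v⟫_𝕜‖
      ≤ ‖T (w - v)‖ * ‖w‖ + ‖T v‖ * ‖w - v‖ := by
        rw [hsplit]
        exact (norm_add_le _ _).trans (add_le_add (norm_inner_le_norm _ _) (norm_inner_le_norm _ _))
    _ ≤ ‖T‖ * ‖w - v‖ * ‖w‖ + ‖T‖ * ‖v‖ * ‖w - v‖ := by
        gcongr <;> exact T.le_opNorm _
    _ = ‖T‖ * (‖w‖ + ‖v‖) * ‖w - v‖ := by ring

theorem tendsto_jointQuadForm_of_tendsto_sub {l : Filter ι} {T : J → H →L[𝕜] H} {v w : ι → H}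
    {lam : J → 𝕜} {C : ℝ} (hv : ∀ i, ‖v i‖ ≤ C) (hw : ∀ i, ‖w i‖ ≤ C)
    (hwv : Tendsto (fun i => w i - v i) l (𝓝 0))
    (hlim : Tendsto (fun i => jointQuadForm T (v i)) l (𝓝 lam)) :
    Tendsto (fun i => jointQuadForm T (w i)) l (𝓝 lam) := by
  rw [tendsto_pi_nhds] at hlim ⊢
  intro j
  have hbound : ∀ i, ‖⟪T j (w i), w i⟫_𝕜 - ⟪T j (v i), v i⟫_𝕜‖ ≤ ‖T j‖ * (C + C) * ‖w i - v i‖ :=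
    fun i => (norm_inner_apply_sub_inner_apply_le (T j) (v i) (w i)).trans (by
      gcongr
      exacts [hw i, hv i])
  have hdiff := squeeze_zero_norm hbound (by simpa using hwv.norm.const_mul (‖T j‖ * (C + C)))
  simpa [jointQuadForm] using hdiff.add (hlim j)

theorem tendsto_jointQuadForm_add_orthonormal [CompleteSpace H] {T : J → H →L[𝕜] H} {lam : J → 𝕜}
    {x : κ → H} (hx : Orthonormal 𝕜 x)
    (hlim : Tendsto (fun k => jointQuadForm T (x k)) cofinite (𝓝 lam)) (v : H) :
    Tendsto (fun k => jointQuadForm T (x k + v)) cofinite (𝓝 (lam + jointQuadForm T v)) := by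
  rw [tendsto_pi_nhds] at hlim ⊢
  intro j
  have hcross₁ : Tendsto (fun k => ⟪T j (x k), v⟫_𝕜) cofinite (𝓝 0) := by
    refine tendsto_zero_iff_norm_tendsto_zero.2 ?_
    simpa [norm_inner_symm v] using
      (tendsto_apply_orthonormal_cofinite hx (innerSL 𝕜 v ∘L T j)).norm
  have hcross₂ : Tendsto (fun k => ⟪T j v, x k⟫_𝕜) cofinite (𝓝 0) :=
    tendsto_apply_orthonormal_cofinite hx (innerSL 𝕜 (T j v))
  have hsum := ((hlim j).add_const (jointQuadForm T v j)).add (hcross₁.add hcross₂)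
  rw [add_zero, add_zero] at hsum
  refine hsum.congr fun k => ?_
  simp only [jointQuadForm, map_add, inner_add_left, inner_add_right]
  ring

-- Adding a new `x k` far out in the family changes the forms of a sum by nearly `lam`, since the
-- cross terms tend to zero.
theorem nsmul_mem_closure_jointQuadForm_sum [CompleteSpace H] [Infinite κ] {T : J → H →L[𝕜] H}
    {lam : J → 𝕜} {x : κ → H} (hx : Orthonormal 𝕜 x)
    (hlim : Tendsto (fun k => jointQuadForm T (x k)) cofinite (𝓝 lam)) (F : Finset κ) (N : ℕ) :
    N • lam ∈ closure {q | ∃ B : Finset κ, B.card = N ∧ Disjoint F B ∧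
      jointQuadForm T (∑ k ∈ B, x k) = q} := by
  classical
  induction N with
  | zero =>
    exact subset_closure ⟨∅, rfl, Finset.disjoint_empty_right F, by ext; simp [jointQuadForm]⟩
  | succ N ih =>
    rw [succ_nsmul']
    refine closure_minimal (t := (lam + ·) ⁻¹' closure _) ?_
      (isClosed_closure.preimage (continuous_const_add lam)) ih
    rintro _ ⟨B, hcard, hdisj, rfl⟩
    refine mem_closure_of_tendsto (tendsto_jointQuadForm_add_orthonormal hx hlim (∑ k ∈ B, x k)) ?_
    filter_upwards [(F ∪ B).finite_toSet.eventually_cofinite_notMem] with k hk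
    simp only [Finset.coe_union, mem_union, Finset.mem_coe, not_or] at hk
    exact ⟨insert k B, by simp [hk.2, hcard], by simp [hk.1, hdisj], by rw [Finset.sum_insert hk.2]⟩

end Form

section Block

variable (𝕜) in
/-- The normalised block sum `|B|^(-1/2) ∑_{k ∈ B} x k`, a unit vector when `x` is orthonormal and
`B` is nonempty. -/
noncomputable def blockVector (x : κ → H) (B : Finset κ) : H :=
  (((√B.card)⁻¹ : ℝ) : 𝕜) • ∑ k ∈ B, x k

theorem jointQuadForm_blockVector (T : J → H →L[𝕜] H) (x : κ → H) (B : Finset κ) :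
    jointQuadForm T (blockVector 𝕜 x B) = (B.card : 𝕜)⁻¹ • jointQuadForm T (∑ k ∈ B, x k) := by
  have hsq : ((√B.card)⁻¹ : ℝ) ^ 2 = (B.card : ℝ)⁻¹ := by
    rw [inv_pow, Real.sq_sqrt (Nat.cast_nonneg _)]
  rw [blockVector, jointQuadForm_smul, RCLike.norm_of_nonneg (inv_nonneg.2 (Real.sqrt_nonneg _))]
  rw [← RCLike.ofReal_pow, hsq, RCLike.ofReal_inv, RCLike.ofReal_natCast]

theorem norm_blockVector {x : κ → H} (hx : Orthonormal 𝕜 x) {B : Finset κ} (hB : B.Nonempty) :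
    ‖blockVector 𝕜 x B‖ = 1 := by
  have hsum : ‖∑ k ∈ B, x k‖ ^ 2 = B.card := by
    simpa using norm_sq_sum_smul_of_orthonormal hx 1 B
  have hne : ‖∑ k ∈ B, x k‖ ≠ 0 := fun h => hB.card_ne_zero (by simpa [h] using hsum.symm)
  rw [blockVector, ← hsum, Real.sqrt_sq (norm_nonneg _), norm_smul, RCLike.norm_ofReal, abs_inv,
    abs_norm, inv_mul_cancel₀ hne]

theorem inner_blockVector_eq_zero {x : κ → H} {B : Finset κ} {z : H}
    (hz : ∀ k ∈ B, ⟪x k, z⟫_𝕜 = 0) : ⟪blockVector 𝕜 x B, z⟫_𝕜 = 0 := by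
  rw [blockVector, inner_smul_left, sum_inner, Finset.sum_eq_zero hz, mul_zero]

theorem inner_blockVector_of_mem {x : κ → H} (hx : Orthonormal 𝕜 x) {B : Finset κ} {k : κ}
    (hk : k ∈ B) : ⟪blockVector 𝕜 x B, x k⟫_𝕜 = (((√B.card)⁻¹ : ℝ) : 𝕜) := by
  classical
  simp [blockVector, inner_smul_left, sum_inner, orthonormal_iff_ite.1 hx, hk]

theorem inner_blockVector_of_notMem {x : κ → H} (hx : Orthonormal 𝕜 x) {B : Finset κ} {k : κ}
    (hk : k ∉ B) : ⟪blockVector 𝕜 x B, x k⟫_𝕜 = 0 :=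
  inner_blockVector_eq_zero fun _ hl => hx.2 (ne_of_mem_of_not_mem hl hk)

theorem orthonormal_blockVector {x : κ → H} (hx : Orthonormal 𝕜 x) {B : ι → Finset κ}
    (hB : ∀ i, (B i).Nonempty) (hdisj : Pairwise fun i j => Disjoint (B i) (B j)) :
    Orthonormal 𝕜 fun i => blockVector 𝕜 x (B i) :=
  ⟨fun i => norm_blockVector hx (hB i), fun _ _ hij => inner_blockVector_eq_zero fun _ hk =>
    inner_eq_zero_symm.1 (inner_blockVector_of_notMem hx (Finset.disjoint_left.1 (hdisj hij) hk))⟩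

theorem mem_closure_jointQuadForm_blockVector [CompleteSpace H] [Infinite κ] {T : J → H →L[𝕜] H}
    {lam : J → 𝕜} {x : κ → H} (hx : Orthonormal 𝕜 x)
    (hlim : Tendsto (fun k => jointQuadForm T (x k)) cofinite (𝓝 lam)) (F : Finset κ) {N : ℕ}
    (hN : N ≠ 0) :
    lam ∈ closure {q | ∃ B : Finset κ, B.card = N ∧ Disjoint F B ∧
      jointQuadForm T (blockVector 𝕜 x B) = q} := by
  have hscale : lam = (N : 𝕜)⁻¹ • N • lam := by
    rw [← Nat.cast_smul_eq_nsmul 𝕜, inv_smul_smul₀ (Nat.cast_ne_zero.2 hN)]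
  rw [hscale]
  refine map_mem_closure (continuous_const_smul _)
    (nsmul_mem_closure_jointQuadForm_sum hx hlim F N) ?_
  rintro _ ⟨B, rfl, hdisj, rfl⟩
  exact ⟨B, rfl, hdisj, jointQuadForm_blockVector T x B⟩

theorem exists_blocks_tendsto_jointQuadForm [CompleteSpace H] [Infinite κ] [Countable J]
    {T : J → H →L[𝕜] H} {lam : J → 𝕜} {x : κ → H} (hx : Orthonormal 𝕜 x)
    (hlim : Tendsto (fun k => jointQuadForm T (x k)) cofinite (𝓝 lam)) :
    ∃ B : ℕ → Finset κ, (∀ m, (B m).Nonempty) ∧ (Pairwise fun m n => Disjoint (B m) (B n)) ∧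
      Tendsto (fun m => (B m).card) atTop atTop ∧
      Tendsto (fun m => jointQuadForm T (blockVector 𝕜 x (B m))) atTop (𝓝 lam) := by
  classical
  obtain ⟨U, hU⟩ := (𝓝 lam).exists_antitone_basis
  obtain ⟨B, hB, hr⟩ := exists_seq_of_forall_finset_exists
    (fun B : Finset κ => B.Nonempty ∧ jointQuadForm T (blockVector 𝕜 x B) ∈ U B.card)
    (fun A B => A.card < B.card ∧ Disjoint A B) fun S _ => by
      obtain ⟨_, hqU, B, hcard, hdisj, rfl⟩ := mem_closure_iff_nhds.1
        (mem_closure_jointQuadForm_blockVector hx hlim (S.sup id) (S.sup Finset.card).succ_ne_zero)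
        (U (S.sup Finset.card + 1)) (hU.mem _)
      refine ⟨B, ⟨Finset.card_pos.1 (by omega), by rwa [hcard]⟩, fun A hA => ⟨?_, ?_⟩⟩
      · rw [hcard]
        exact Nat.lt_succ_of_le (Finset.le_sup hA)
      · exact hdisj.mono_left (Finset.le_sup (f := id) hA)
  have hmono : StrictMono fun m => (B m).card := fun m n hmn => (hr m n hmn).1
  refine ⟨B, fun m => (hB m).1, fun m n hmn => ?_, hmono.tendsto_atTop, ?_⟩
  · rcases hmn.lt_or_gt with h | h
    exacts [(hr _ _ h).2, (hr _ _ h).2.symm]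
  · exact hU.tendsto fun m => hU.antitone (hmono.le_apply) (hB m).2

end Block

section Swap

theorem inner_sub_sub_of_orthonormal {s y : ι → H} (hs : Orthonormal 𝕜 s) (hy : Orthonormal 𝕜 y)
    (hsy : ∀ i j, ⟪s i, y j⟫_𝕜 = 0) [DecidableEq ι] (i j : ι) :
    ⟪y j - s j, y i - s i⟫_𝕜 = if j = i then 2 else 0 := by
  simp only [inner_sub_left, inner_sub_right, hsy, inner_eq_zero_symm.1 (hsy i j),
    orthonormal_iff_ite.1 hs, orthonormal_iff_ite.1 hy]
  split_ifs <;> ring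

variable [CompleteSpace H]

variable (𝕜) in
/-- The reflection fixing the orthogonal complement of all differences `y i - s i`. When `s` and `y`
are orthonormal and mutually orthogonal families, it exchanges `y i` with `s i` for every `i`. -/
noncomputable def swapReflection (s y : ι → H) : H ≃ₗᵢ[𝕜] H :=
  (span 𝕜 (range fun i => y i - s i))ᗮ.reflection

theorem swapReflection_eq_self {s y : ι → H} {z : H} (hz : ∀ i, ⟪y i - s i, z⟫_𝕜 = 0) :
    swapReflection 𝕜 s y z = z := by
  have hker : span 𝕜 (range fun i => y i - s i) ≤ (𝕜 ∙ z)ᗮ :=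
    span_le.2 (range_subset_iff.2 fun i => mem_orthogonal_singleton_iff_inner_left.2 (hz i))
  exact reflection_mem_subspace_eq_self
    (orthogonal_le hker (le_orthogonal_orthogonal _ (mem_span_singleton_self z)))

theorem swapReflection_apply {s y : ι → H} (hs : Orthonormal 𝕜 s) (hy : Orthonormal 𝕜 y)
    (hsy : ∀ i j, ⟪s i, y j⟫_𝕜 = 0) {i : ι} {z : H} (hz : ∀ j ≠ i, ⟪y j - s j, z⟫_𝕜 = 0) :
    swapReflection 𝕜 s y z = z - ⟪y i - s i, z⟫_𝕜 • (y i - s i) := by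
  classical
  set p : H := z - (⟪y i - s i, z⟫_𝕜 / 2) • (y i - s i)
  have hfix : swapReflection 𝕜 s y p = p := by
    refine swapReflection_eq_self fun j => ?_
    rw [inner_sub_right, inner_smul_right, inner_sub_sub_of_orthonormal hs hy hsy]
    split_ifs with hji
    · subst hji
      ring
    · rw [hz j hji, mul_zero, sub_zero]
  have hneg : swapReflection 𝕜 s y (y i - s i) = -(y i - s i) :=
    reflection_mem_subspace_orthogonalComplement_eq_neg
      (le_orthogonal_orthogonal _ (subset_span (mem_range_self i)))
  calc swapReflection 𝕜 s y z
      = swapReflection 𝕜 s y (p + (⟪y i - s i, z⟫_𝕜 / 2) • (y i - s i)) := by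
        rw [sub_add_cancel]
    _ = p - (⟪y i - s i, z⟫_𝕜 / 2) • (y i - s i) := by
        rw [map_add, map_smul, hfix, hneg, smul_neg, ← sub_eq_add_neg]
    _ = z - ⟪y i - s i, z⟫_𝕜 • (y i - s i) := by
        rw [sub_sub, ← add_smul, add_halves]

theorem swapReflection_apply_right {s y : ι → H} (hs : Orthonormal 𝕜 s) (hy : Orthonormal 𝕜 y)
    (hsy : ∀ i j, ⟪s i, y j⟫_𝕜 = 0) (i : ι) : swapReflection 𝕜 s y (y i) = s i := by
  rw [swapReflection_apply hs hy hsy (i := i) fun j hj => by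
    rw [inner_sub_left, hy.2 hj, hsy, sub_zero]]
  simp [inner_sub_left, hsy, hy.1]

theorem tendsto_swapReflection_sub {x : κ → H} {y : ι → H} (hx : Orthonormal 𝕜 x)
    (hy : Orthonormal 𝕜 y) (hxy : ∀ k i, ⟪x k, y i⟫_𝕜 = 0) {B : ι → Finset κ}
    (hB : ∀ i, (B i).Nonempty) (hdisj : Pairwise fun i j => Disjoint (B i) (B j))
    (hcard : Tendsto (fun i => (B i).card) cofinite atTop) :
    Tendsto (fun k => swapReflection 𝕜 (fun i => blockVector 𝕜 x (B i)) y (x k) - x k) cofinite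
      (𝓝 0) := by
  set s : ι → H := fun i => blockVector 𝕜 x (B i)
  have hs : Orthonormal 𝕜 s := orthonormal_blockVector hx hB hdisj
  have hsy : ∀ i j, ⟪s i, y j⟫_𝕜 = 0 := fun i j => inner_blockVector_eq_zero fun k _ => hxy k j
  have hd : ∀ {i k}, k ∉ B i → ⟪y i - s i, x k⟫_𝕜 = 0 := fun hk => by
    rw [inner_sub_left, inner_eq_zero_symm.1 (hxy _ _), inner_blockVector_of_notMem hx hk, sub_zero]
  have hlim : Tendsto (fun i => (√(B i).card)⁻¹ * 2) cofinite (𝓝 0) := by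
    simpa using ((Real.tendsto_sqrt_atTop.comp
      (tendsto_natCast_atTop_atTop.comp hcard)).inv_tendsto_atTop).mul_const 2
  refine tendsto_zero_cofinite_of_le_on_blocks hlim (B := B) fun k hk => ?_
  obtain ⟨i, hki⟩ : ∃ i, k ∈ B i := by
    by_contra! hnone
    exact hk (sub_eq_zero.2 (swapReflection_eq_self fun i => hd (hnone i)))
  refine ⟨i, hki, ?_⟩
  have hother : ∀ j ≠ i, ⟪y j - s j, x k⟫_𝕜 = 0 := fun j hj =>
    hd (Finset.disjoint_right.1 (hdisj hj) hki)
  have hcoeff : ⟪y i - s i, x k⟫_𝕜 = -(((√(B i).card)⁻¹ : ℝ) : 𝕜) := by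
    rw [inner_sub_left, inner_eq_zero_symm.1 (hxy k i), inner_blockVector_of_mem hx hki, zero_sub]
  have hdist : ‖y i - s i‖ ≤ 2 := by
    calc ‖y i - s i‖ ≤ ‖y i‖ + ‖s i‖ := norm_sub_le _ _
      _ = 2 := by rw [hy.1, hs.1]; norm_num
  calc ‖swapReflection 𝕜 s y (x k) - x k‖ = (√(B i).card)⁻¹ * ‖y i - s i‖ := by
        rw [swapReflection_apply hs hy hsy hother, hcoeff, sub_sub_cancel_left, norm_neg, norm_smul,
          norm_neg, RCLike.norm_of_nonneg (inv_nonneg.2 (Real.sqrt_nonneg _))]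
    _ ≤ (√(B i).card)⁻¹ * 2 := by gcongr

end Swap

section HilbertBasis

variable [CompleteSpace H]

theorem exists_linearIsometryEquiv_tendsto_jointQuadForm [Infinite κ] [Countable ι] [Countable J]
    {T : J → H →L[𝕜] H} {lam : J → 𝕜} {b : κ ⊕ ι → H} (hb : Orthonormal 𝕜 b)
    (hlim : Tendsto (fun k => jointQuadForm T (b (.inl k))) cofinite (𝓝 lam)) :
    ∃ R : H ≃ₗᵢ[𝕜] H, Tendsto (fun a => jointQuadForm T (R (b a))) cofinite (𝓝 lam) := by
  have hx : Orthonormal 𝕜 fun k => b (.inl k) := hb.comp _ Sum.inl_injective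
  have hy : Orthonormal 𝕜 fun i => b (.inr i) := hb.comp _ Sum.inr_injective
  have hxy : ∀ k i, ⟪b (.inl k), b (.inr i)⟫_𝕜 = 0 := fun _ _ => hb.2 Sum.inl_ne_inr
  obtain ⟨B, hB, hdisj, hcard, hblock⟩ := exists_blocks_tendsto_jointQuadForm hx hlim
  obtain ⟨e, he⟩ := Countable.exists_injective_nat ι
  have he_tendsto : Tendsto e cofinite atTop := Nat.cofinite_eq_atTop ▸ he.tendsto_cofinite
  have hdisj' : Pairwise fun i j => Disjoint (B (e i)) (B (e j)) := hdisj.comp_of_injective he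
  have hs := orthonormal_blockVector hx (fun i => hB (e i)) hdisj'
  set R := swapReflection 𝕜 (fun i => blockVector 𝕜 (fun k => b (.inl k)) (B (e i)))
    fun i => b (.inr i)
  refine ⟨R, tendsto_cofinite_of_sum ?_ ?_⟩
  · refine tendsto_jointQuadForm_of_tendsto_sub (C := 1) (fun k => (hx.1 k).le) (fun k => ?_)
      (tendsto_swapReflection_sub hx hy hxy (fun i => hB (e i)) hdisj' (hcard.comp he_tendsto)) hlim
    rw [R.norm_map, hx.1]
  · have hR : ∀ i, R (b (.inr i)) = blockVector 𝕜 (fun k => b (.inl k)) (B (e i)) :=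
      swapReflection_apply_right hs hy fun i j => inner_blockVector_eq_zero fun k _ => hxy k j
    simpa only [hR, Function.comp_def] using hblock.comp he_tendsto

theorem exists_hilbertBasis_map_reindex (b : HilbertBasis ι 𝕜 H) (R : H ≃ₗᵢ[𝕜] H) (e : κ ≃ ι) :
    ∃ u : HilbertBasis κ 𝕜 H, ∀ k, u k = R (b (e k)) := by
  have hu : Orthonormal 𝕜 fun k => R (b (e k)) :=
    (b.orthonormal.comp e e.injective).comp_linearIsometryEquiv R
  refine ⟨.mkOfOrthogonalEqBot hu (eq_bot_iff.2 fun v hv => ?_), fun k => by simp⟩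
  have hrepr : b.repr (R.symm v) = 0 := by
    ext i
    have hv_orth : ⟪R (b (e (e.symm i))), v⟫_𝕜 = 0 :=
      (mem_orthogonal _ _).1 hv _ (subset_span (mem_range_self _))
    rwa [e.apply_symm_apply, ← R.apply_symm_apply v, R.inner_map_map, ← b.repr_apply_apply]
      at hv_orth
  simpa using hrepr

theorem exists_hilbertBasis_tendsto_jointQuadForm [TopologicalSpace.SeparableSpace H] [Countable J]
    {T : J → H →L[𝕜] H} {lam : J → 𝕜} {x : ℕ → H} (hx : Orthonormal 𝕜 x)
    (hlim : Tendsto (fun k => jointQuadForm T (x k)) atTop (𝓝 lam)) :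
    ∃ u : HilbertBasis ℕ 𝕜 H, Tendsto (fun k => jointQuadForm T (u k)) atTop (𝓝 lam) := by
  rw [← Nat.cofinite_eq_atTop] at hlim ⊢
  obtain ⟨s, b, hbx⟩ := exists_hilbertBasis_sum_extension hx
  have : Countable (ℕ ⊕ s) := countable_of_orthonormal b.orthonormal
  have : Countable s := Sum.inr_injective.countable (β := ℕ ⊕ s)
  obtain ⟨R, hR⟩ := exists_linearIsometryEquiv_tendsto_jointQuadForm b.orthonormal
    (by simpa only [hbx] using hlim)
  obtain ⟨e⟩ : Nonempty (ℕ ≃ ℕ ⊕ s) := nonempty_equiv_of_countable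
  obtain ⟨u, hu⟩ := exists_hilbertBasis_map_reindex b R e
  exact ⟨u, by simpa only [hu, Function.comp_def] using hR.comp e.injective.tendsto_cofinite⟩

end HilbertBasis

section CompactPerturbation

variable [CompleteSpace H] {T : J → H →L[𝕜] H} {lam : J → 𝕜} {u : ι → H}

theorem exists_compact_add_constant_diagonal (hu : Orthonormal 𝕜 u)
    (hlim : Tendsto (fun i => jointQuadForm T (u i)) cofinite (𝓝 lam)) :
    ∃ K : J → H →L[𝕜] H, (∀ j, IsCompactOperator (K j)) ∧
      ∀ i, jointQuadForm (T + K) (u i) = lam := by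
  rw [tendsto_pi_nhds] at hlim
  have hdefect : ∀ j, Tendsto (fun i => starRingEnd 𝕜 (lam j - jointQuadForm T (u i) j)) cofinite
      (𝓝 0) := fun j => by
    simpa [Function.comp_def] using
      (RCLike.continuous_conj.tendsto _).comp ((hlim j).const_sub (lam j))
  choose K hK hKu using fun j => exists_isCompactOperator_diagonal hu (hdefect j)
  refine ⟨K, hK, fun i => funext fun j => ?_⟩
  simp [jointQuadForm, inner_add_left, hKu, inner_smul_left, hu.1]

theorem tendsto_jointQuadForm_of_compact_add_constant_diagonal {K : J → H →L[𝕜] H}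
    (hK : ∀ j, IsCompactOperator (K j)) (hu : Orthonormal 𝕜 u)
    (hdiag : ∀ i, jointQuadForm (T + K) (u i) = lam) :
    Tendsto (fun i => jointQuadForm T (u i)) cofinite (𝓝 lam) := by
  refine tendsto_pi_nhds.2 fun j => ?_
  have hnull : Tendsto (fun i => ⟪K j (u i), u i⟫_𝕜) cofinite (𝓝 0) := by
    refine squeeze_zero_norm (fun i => ?_)
      (tendsto_zero_iff_norm_tendsto_zero.1 (tendsto_compact_apply_orthonormal_cofinite hu (hK j)))
    simpa [hu.1] using norm_inner_le_norm (𝕜 := 𝕜) (K j (u i)) (u i)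
  have hdiff : ∀ i, lam j - ⟪K j (u i), u i⟫_𝕜 = jointQuadForm T (u i) j := fun i => by
    simp [← hdiag i, jointQuadForm, inner_add_left]
  simpa only [hdiff, sub_zero] using hnull.const_sub (lam j)

end CompactPerturbation

end InnerProduct

theorem stmt_13_general {𝕜 H J : Type*} [RCLike 𝕜] [NormedAddCommGroup H] [InnerProductSpace 𝕜 H]
    [CompleteSpace H] [TopologicalSpace.SeparableSpace H] [Countable J]
    (T : J → H →L[𝕜] H) (lam : J → 𝕜) :
    (∃ x : ℕ → H, Orthonormal 𝕜 x ∧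
        ∀ j, Tendsto (fun k => ⟪T j (x k), x k⟫_𝕜) atTop (𝓝 (lam j))) ↔
      ∃ K : J → H →L[𝕜] H, (∀ j, IsCompactOperator (K j)) ∧
        ∃ u : HilbertBasis ℕ 𝕜 H, ∀ k j, ⟪(T j + K j) (u k), u k⟫_𝕜 = lam j := by
  constructor
  · rintro ⟨x, hx, hlim⟩
    obtain ⟨u, hu⟩ := exists_hilbertBasis_tendsto_jointQuadForm hx (tendsto_pi_nhds.2 hlim)
    rw [← Nat.cofinite_eq_atTop] at hu
    obtain ⟨K, hK, hdiag⟩ := exists_compact_add_constant_diagonal u.orthonormal hu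
    exact ⟨K, hK, u, fun k => congrFun (hdiag k)⟩
  · rintro ⟨K, hK, u, hdiag⟩
    refine ⟨u, u.orthonormal, tendsto_pi_nhds.1 ?_⟩
    rw [← Nat.cofinite_eq_atTop]
    exact tendsto_jointQuadForm_of_compact_add_constant_diagonal hK u.orthonormal fun k =>
      funext (hdiag k)

/-- `⋃_{𝒦 compact} D_const(𝒯 + 𝒦) = W_e(𝒯)`: a point `λ ∈ ℂ^n` is in the joint
essential numerical range of `𝒯` iff it is a constant diagonal of some compact
perturbation of `𝒯`. -/
theorem stmt_13 {H : Type*} [NormedAddCommGroup H] [InnerProductSpace ℂ H]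
    [CompleteSpace H] [TopologicalSpace.SeparableSpace H]
    (hdim : ¬ FiniteDimensional ℂ H)
    {n : ℕ} (T : Fin n → H →L[ℂ] H) (lam : Fin n → ℂ) :
    lam ∈ jointEssNumRange T ↔
      ∃ K : Fin n → H →L[ℂ] H, (∀ j, IsCompactOperator (K j)) ∧
        ∃ u : HilbertBasis ℕ ℂ H, ∀ k j, ⟪(T j + K j) (u k), u k⟫ = lam j :=
  stmt_13_general T lam
end

section
/- Let H be a complex separable infinite-dimensional Hilbert space and 𝒯 = (T_1, …, T_n) an n-tuple of bounded operators on H. Then the following three sets coincide: (i) the intersection over all n-tuples 𝒦 of compact operators on H of the joint numerical ranges W(𝒯 + 𝒦); (ii) the intersection over all n-tuples 𝒦 of compact operators on H of the constant-diagonal sets D_const(𝒯 + 𝒦); (iii) the interior in ℂ^n of W_e(𝒯). -/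
open Filter Metric
open scoped ComplexInnerProductSpace

/-- The joint numerical range of a tuple of bounded operators. -/
def jointNumRange {H : Type*} [NormedAddCommGroup H] [InnerProductSpace ℂ H]
    {n : ℕ} (T : Fin n → H →L[ℂ] H) : Set (Fin n → ℂ) :=
  {lam | ∃ x : H, ‖x‖ = 1 ∧ ∀ j, ⟪(T j) x, x⟫ = lam j}

/-- The constant-diagonal set of a tuple of bounded operators. -/
def constDiag {H : Type*} [NormedAddCommGroup H] [InnerProductSpace ℂ H]
    [CompleteSpace H] {n : ℕ} (T : Fin n → H →L[ℂ] H) : Set (Fin n → ℂ) :=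
  {lam | ∃ u : HilbertBasis ℕ ℂ H, ∀ k j, ⟪(T j) (u k), u k⟫ = lam j}

/-!
Write `q_T x = (⟪T₁ x, x⟫, …, ⟪Tₙ x, x⟫)`.

*The interior of `W_e(T)` consists of constant diagonals.* Choosing unit vectors one after another,
each orthogonal to the previous ones and to their images under all `T_j` and `T_j*`, makes `q_T` of
a Pythagorean combination the convex combination of its values. Hence `W_e(T)` is convex, and below
any finite codimension every interior point `λ` of `W_e(T)` is exactly `q_T z` for a unit vector
`z`. Given a unit vector `y`, write `λ = a q_T y + (1 - a) μ` with `μ` still interior and `a > 0`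
independent of `y`; then `√a y + √(1 - a) z`, with `q_T z = μ`, realises `λ` and captures the fixed
proportion `√a` of `y`. Let `y` run through the remainders of a dense sequence, each term repeated
infinitely often: a vector orthogonal to the whole orthonormal sequence so obtained is orthogonal to
the dense sequence, so the sequence is a basis. Since `W_e` is invariant under compact
perturbations, it can be produced for every `T + K`.

*Other points are avoided.* If `λ` is not interior to the convex set `W_e(T)`, a nonzero real
functional `f` satisfies `f ≤ f λ` on `W_e(T)`. The self-adjoint operator `S` with quadratic form
`f ∘ q_T - f λ ‖·‖²` has no essential spectrum above `0`, so its positive part `S₊` is compact: it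
is the norm limit of the finite-rank truncations `(S - ε)₊`. Adding a strictly positive compact
operator gives a compact `D` whose form strictly dominates that of `S`, and subtracting `D` from `T`
in a direction `v` with `f v = 1` pushes the whole joint numerical range into `f < f λ`.
-/

section Topology

theorem frequently_unpair_fst_eq (k : ℕ) : ∃ᶠ m : ℕ in atTop, m.unpair.1 = k :=
  frequently_atTop.2 fun m => ⟨Nat.pair k m, Nat.right_le_pair k m, by simp⟩

theorem exists_seq_subset_closure_range {α : Type*} [PseudoMetricSpace α] {A : Set α}
    [TopologicalSpace.SeparableSpace A] (hA : A.Nonempty) :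
    ∃ p : ℕ → α, (∀ i, p i ∈ A) ∧
      ∀ q : ℕ → α, Tendsto (fun i => dist (q i) (p i)) atTop (nhds 0) →
        A ⊆ closure (Set.range q) := by
  have := hA.to_subtype
  obtain ⟨d, hd⟩ := TopologicalSpace.exists_dense_seq A
  refine ⟨fun i => d i.unpair.1, fun i => (d i.unpair.1).2, fun q hq x hx => ?_⟩
  refine Metric.mem_closure_range_iff.2 fun ε hε => ?_
  obtain ⟨k, hk⟩ := hd.exists_dist_lt (⟨x, hx⟩ : A) (half_pos hε)
  -- `d k` occurs infinitely often in `p`, in particular where `q` is already close to `p`.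
  obtain ⟨m, rfl, hm⟩ := ((frequently_unpair_fst_eq k).and_eventually
    (hq.eventually (gt_mem_nhds (half_pos hε)))).exists
  exact ⟨m, (dist_triangle_right x (q m) _).trans_lt (add_halves ε ▸ add_lt_add hk hm)⟩

end Topology

section Convexity

variable {E : Type*} [NormedAddCommGroup E] [NormedSpace ℝ E]

theorem exists_forall_norm_le_exists_combo_eq {U : Set E} {x : E} (hU : U ∈ nhds x) (M : ℝ) :
    ∃ a : ℝ, 0 < a ∧ a < 1 ∧ ∀ p : E, ‖p‖ ≤ M → ∃ q ∈ U, a • p + (1 - a) • q = x := by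
  obtain ⟨r, hr, hball⟩ := Metric.mem_nhds_iff.1 hU
  obtain ⟨s, hs, hsr⟩ := exists_pos_mul_lt hr (‖x‖ + M)
  refine ⟨s / (1 + s), by positivity, (div_lt_one (by positivity)).2 (by linarith),
    fun p hp => ⟨x + s • (x - p), hball ?_, ?_⟩⟩
  · rw [mem_ball_iff_norm, add_sub_cancel_left, norm_smul, Real.norm_of_nonneg hs.le, mul_comm]
    exact (mul_le_mul_of_nonneg_right ((norm_sub_le x p).trans (by gcongr)) hs.le).trans_lt hsr
  · match_scalars <;> field_simp <;> ring

variable [FiniteDimensional ℝ E] {C : Set E}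

theorem interior_closure_eq_interior_of_convex (hC : Convex ℝ C) :
    interior (closure C) = interior C := by
  refine (interior_mono subset_closure).antisymm' ?_
  rcases (interior (closure C)).eq_empty_or_nonempty with hempty | hne
  · simp [hempty]
  refine (hC.interior_closure_eq_interior_of_nonempty_interior ?_).le
  rw [hC.interior_nonempty_iff_affineSpan_eq_top, eq_top_iff]
  rw [hC.closure.interior_nonempty_iff_affineSpan_eq_top] at hne
  exact hne.ge.trans <| affineSpan_le.2 <|
    closure_minimal (subset_affineSpan ℝ C) (AffineSubspace.closed_of_finiteDimensional _)

theorem exists_ne_zero_forall_apply_eq_of_interior_eq_empty (hC : Convex ℝ C)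
    (hne : C.Nonempty) (hint : interior C = ∅) :
    ∃ f : E →L[ℝ] ℝ, f ≠ 0 ∧ ∀ x ∈ C, ∀ y ∈ C, f x = f y := by
  have hspan : affineSpan ℝ C ≠ ⊤ := by
    rwa [Ne, ← hC.interior_nonempty_iff_affineSpan_eq_top, Set.not_nonempty_iff_eq_empty]
  have hdir : (affineSpan ℝ C).direction < ⊤ :=
    lt_top_iff_ne_top.2 <| (AffineSubspace.direction_eq_top_iff_of_nonempty
      (hne.mono (subset_affineSpan ℝ C))).not.2 hspan
  obtain ⟨f, hf0, hf⟩ := Submodule.exists_le_ker_of_lt_top _ hdir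
  refine ⟨f.toContinuousLinearMap, by simpa using hf0, fun x hx y hy => sub_eq_zero.1 ?_⟩
  rw [← map_sub]
  exact hf (AffineSubspace.vsub_mem_direction (subset_affineSpan ℝ C hx)
    (subset_affineSpan ℝ C hy))

theorem exists_ne_zero_forall_apply_le_of_notMem_interior (hC : Convex ℝ C) (hne : C.Nonempty)
    {a : E} (ha : a ∉ interior C) : ∃ f : E →L[ℝ] ℝ, f ≠ 0 ∧ ∀ x ∈ C, f x ≤ f a := by
  rcases (interior C).eq_empty_or_nonempty with hempty | hint
  · obtain ⟨f, hf0, hf⟩ := exists_ne_zero_forall_apply_eq_of_interior_eq_empty hC hne hempty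
    obtain ⟨y, hy⟩ := hne
    rcases le_total (f y) (f a) with h | h
    · exact ⟨f, hf0, fun x hx => (hf x hx y hy).trans_le h⟩
    · exact ⟨-f, neg_ne_zero.2 hf0, fun x hx => by simpa [hf x hx y hy] using h⟩
  · obtain ⟨f, hf⟩ := geometric_hahn_banach_open_point hC.interior isOpen_interior ha
    refine ⟨f, ?_, fun x hx => ?_⟩
    · rintro rfl
      simpa using hf _ hint.some_mem
    · have hx' : x ∈ closure (interior C) := by
        rw [hC.closure_interior_eq_closure_of_nonempty_interior hint]
        exact subset_closure hx
      exact closure_minimal (t := {y | f y ≤ f a}) (fun y hy => (hf y hy).le)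
        (isClosed_le f.continuous continuous_const) hx'

end Convexity

section InnerProductSpace

variable {𝕜 E F ι : Type*} [RCLike 𝕜] [NormedAddCommGroup E] [InnerProductSpace 𝕜 E]
  [NormedAddCommGroup F] [InnerProductSpace 𝕜 F]

theorem tendsto_inner_of_orthonormal {v : ι → E} (hv : Orthonormal 𝕜 v) (x : E) :
    Tendsto (fun i => inner 𝕜 (v i) x) cofinite (nhds 0) := by
  rw [tendsto_zero_iff_norm_tendsto_zero]
  simpa using (hv.inner_products_summable x).tendsto_cofinite_zero.sqrt

theorem tendsto_compactOperator_apply_of_orthonormal [CompleteSpace E] [CompleteSpace F]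
    {K : E →L[𝕜] F} (hK : IsCompactOperator K) {v : ι → E} (hv : Orthonormal 𝕜 v) :
    Tendsto (fun i => K (v i)) cofinite (nhds 0) := by
  obtain ⟨C, hC, hsub⟩ := hK.image_closedBall_subset_compact (f := (K : E →ₗ[𝕜] F)) 1
  refine hC.tendsto_nhds_of_unique_mapClusterPt
    (.of_forall fun i => hsub ⟨v i, by simp [hv.1 i], rfl⟩) fun y _ hy => ?_
  have hweak : Tendsto (fun i => inner 𝕜 (K (v i)) y) cofinite (nhds 0) := by
    simpa only [ContinuousLinearMap.adjoint_inner_right] using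
      tendsto_inner_of_orthonormal hv (K.adjoint y)
  have hcluster : MapClusterPt (inner 𝕜 y y) cofinite fun i => inner 𝕜 (K (v i)) y :=
    hy.continuousAt_comp (f := fun z => inner 𝕜 z y) (by fun_prop)
  have : (nhds (inner 𝕜 y y) ⊓ nhds (0 : 𝕜)).NeBot :=
    hcluster.clusterPt.neBot.mono (inf_le_inf_left _ hweak)
  exact inner_self_eq_zero.1 (eq_of_nhds_neBot this)

theorem isCompactOperator_of_forall_mem {K : E →L[𝕜] F} (V : Submodule 𝕜 F)
    [FiniteDimensional 𝕜 V] (h : ∀ x, K x ∈ V) : IsCompactOperator K := by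
  have := FiniteDimensional.proper 𝕜 V
  exact (isCompactOperator_of_locallyCompactSpace_rng V.subtypeL).comp_clm (K.codRestrict V h)

theorem exists_orthonormal_of_not_finiteDimensional (h : ¬FiniteDimensional 𝕜 E) :
    ∃ v : ℕ → E, Orthonormal 𝕜 v := by
  have : Infinite (Module.Basis.ofVectorSpaceIndex 𝕜 E) := by
    by_contra hfin
    rw [not_infinite_iff_finite] at hfin
    exact h (.of_basis (Module.Basis.ofVectorSpace 𝕜 E))
  exact ⟨_, InnerProductSpace.gramSchmidtNormed_orthonormal <|
    (Module.Basis.ofVectorSpace 𝕜 E).linearIndependent.comp _ (Infinite.natEmbedding _).injective⟩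

theorem orthonormal_of_forall_lt [LinearOrder ι] {v : ι → E} (hnorm : ∀ i, ‖v i‖ = 1)
    (horth : ∀ ⦃i k⦄, i < k → inner 𝕜 (v i) (v k) = 0) : Orthonormal 𝕜 v :=
  ⟨hnorm, fun _ _ h => h.lt_or_gt.elim (horth ·) fun h => inner_eq_zero_symm.1 (horth h)⟩

theorem exists_orthonormal_of_forall_finite {P : ℕ → Set E → E → Prop}
    (h : ∀ m (s : Set E), s.Finite → ∃ z ∈ (Submodule.span 𝕜 s)ᗮ, ‖z‖ = 1 ∧ P m s z) :
    ∃ z : ℕ → E, Orthonormal 𝕜 z ∧ ∀ m, P m (z '' Set.Iio m) (z m) := by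
  obtain ⟨z, hz⟩ := Set.seq_of_forall_finite_exists
    (P := fun z s => z ∈ (Submodule.span 𝕜 s)ᗮ ∧ ‖z‖ = 1 ∧ P s.ncard s z)
    fun s hs => h s.ncard s hs
  have hortho : Orthonormal 𝕜 z := orthonormal_of_forall_lt (fun m => (hz m).2.1) fun i k hik =>
    (hz k).1 _ (Submodule.subset_span ⟨i, hik, rfl⟩)
  refine ⟨z, hortho, fun m => ?_⟩
  simpa [Set.ncard_image_of_injective _ hortho.linearIndependent.injective] using (hz m).2.2

theorem exists_unit_mem_orthogonal_norm_sub_le (V : Submodule 𝕜 E) [V.HasOrthogonalProjection]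
    {x : E} (hx : ‖x‖ = 1) (hlt : ‖V.starProjection x‖ < 1) :
    ∃ z ∈ Vᗮ, ‖z‖ = 1 ∧ ‖z - x‖ ≤ 2 * ‖V.starProjection x‖ := by
  set y := x - V.starProjection x with hy
  have hxy : ‖x - y‖ = ‖V.starProjection x‖ := by rw [hy, sub_sub_cancel]
  have hy1 : |1 - ‖y‖| ≤ ‖V.starProjection x‖ := by
    rw [← hx, ← hxy]
    exact abs_norm_sub_norm_le x y
  have hy0 : y ≠ 0 := by
    intro h0
    rw [h0, norm_zero, sub_zero, abs_one] at hy1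
    linarith
  refine ⟨(‖y‖⁻¹ : 𝕜) • y, Submodule.smul_mem _ _ (V.sub_starProjection_mem_orthogonal x),
    norm_smul_inv_norm hy0, ?_⟩
  have hzy : ‖(‖y‖⁻¹ : 𝕜) • y - y‖ = |1 - ‖y‖| := by
    have hsmul : (‖y‖⁻¹ : 𝕜) • y - y = ((‖y‖⁻¹ - 1 : ℝ) : 𝕜) • y := by
      push_cast
      rw [sub_smul, one_smul]
    rw [hsmul, norm_smul, RCLike.norm_ofReal, ← abs_norm y, ← abs_mul, abs_norm, sub_mul,
      inv_mul_cancel₀ (norm_ne_zero_iff.2 hy0), one_mul]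
  calc ‖(‖y‖⁻¹ : 𝕜) • y - x‖
      ≤ ‖(‖y‖⁻¹ : 𝕜) • y - y‖ + ‖y - x‖ := norm_sub_le_norm_sub_add_norm_sub ..
    _ ≤ ‖V.starProjection x‖ + ‖V.starProjection x‖ := by
        rw [hzy, norm_sub_rev y x, hxy]
        gcongr
    _ = 2 * ‖V.starProjection x‖ := (two_mul _).symm

theorem orthogonal_span_range_eq_bot_of_frequently_le {u : ℕ → E} (hu : Orthonormal 𝕜 u)
    {D : Set E} (hD : Dense D) {c : ℝ} (hc : 0 < c)
    (h : ∀ y ∈ D, ∃ᶠ m in atTop, ∀ w ∈ (Submodule.span 𝕜 (u '' Set.Iio m))ᗮ,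
      c * ‖inner 𝕜 w y‖ ≤ ‖w‖ * ‖inner 𝕜 (u m) y‖) :
    (Submodule.span 𝕜 (Set.range u))ᗮ = ⊥ := by
  refine (Submodule.eq_bot_iff _).2 fun w hw => hD.eq_zero_of_inner_left 𝕜 fun y hy => ?_
  have hlim : Tendsto (fun m => ‖w‖ * ‖inner 𝕜 (u m) y‖) atTop (nhds 0) := by
    simpa [Nat.cofinite_eq_atTop] using
      (tendsto_inner_of_orthonormal hu y).norm.const_mul ‖w‖
  have hle : c * ‖inner 𝕜 w y‖ ≤ 0 := ge_of_tendsto_of_frequently hlim <| (h y hy).mono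
    fun m hm => hm w (Submodule.orthogonal_le (Submodule.span_mono (Set.image_subset_range _ _)) hw)
  exact norm_le_zero_iff.1 (nonpos_of_mul_nonpos_right hle hc)

end InnerProductSpace

section JointForm

variable {H : Type*} [NormedAddCommGroup H] [InnerProductSpace ℂ H] {ι : Type*}

/-- The tuple of quadratic forms `x ↦ (⟪T j x, x⟫)_j` of a tuple of operators: the joint numerical
range is its image of the unit sphere. -/
noncomputable def jointForm (T : ι → H →L[ℂ] H) (x : H) : ι → ℂ := fun j => ⟪T j x, x⟫

variable [Fintype ι]

theorem norm_jointForm_sub_le (T : ι → H →L[ℂ] H) (x y : H) :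
    ‖jointForm T x - jointForm T y‖ ≤ ‖T‖ * (‖x‖ + ‖y‖) * ‖x - y‖ := by
  refine (pi_norm_le_iff_of_nonneg (by positivity)).2 fun j => ?_
  have hT (v w : H) : ‖⟪T j v, w⟫‖ ≤ ‖T‖ * ‖v‖ * ‖w‖ :=
    (norm_inner_le_norm _ _).trans <| mul_le_mul_of_nonneg_right
      ((T j).le_of_opNorm_le (norm_le_pi_norm T j) v) (norm_nonneg w)
  calc ‖⟪T j x, x⟫ - ⟪T j y, y⟫‖ = ‖⟪T j (x - y), x⟫ + ⟪T j y, x - y⟫‖ := by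
        simp only [map_sub, inner_sub_left, inner_sub_right, sub_add_sub_cancel]
    _ ≤ ‖T‖ * ‖x - y‖ * ‖x‖ + ‖T‖ * ‖y‖ * ‖x - y‖ :=
        (norm_add_le _ _).trans (add_le_add (hT _ _) (hT _ _))
    _ = ‖T‖ * (‖x‖ + ‖y‖) * ‖x - y‖ := by ring

theorem norm_jointForm_le (T : ι → H →L[ℂ] H) (x : H) : ‖jointForm T x‖ ≤ ‖T‖ * ‖x‖ ^ 2 := by
  have h0 : jointForm T 0 = 0 := by
    ext j
    simp [jointForm]
  simpa [h0, sq, mul_assoc] using norm_jointForm_sub_le T x 0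

end JointForm

section JointEssNumRange

variable {H : Type*} [NormedAddCommGroup H] [InnerProductSpace ℂ H] {n : ℕ}
  {T : Fin n → H →L[ℂ] H} {lam : Fin n → ℂ}

theorem mem_jointEssNumRange_iff : lam ∈ jointEssNumRange T ↔
    ∃ x : ℕ → H, Orthonormal ℂ x ∧ Tendsto (fun k => jointForm T (x k)) atTop (nhds lam) :=
  exists_congr fun _ => and_congr_right fun _ => tendsto_pi_nhds.symm

theorem exists_subseq_tendsto_mem_jointEssNumRange (T : Fin n → H →L[ℂ] H) {x : ℕ → H}
    (hx : Orthonormal ℂ x) :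
    ∃ μ ∈ jointEssNumRange T, ∃ φ : ℕ → ℕ,
      Tendsto (fun k => jointForm T (x (φ k))) atTop (nhds μ) := by
  have hmem k : jointForm T (x k) ∈ closedBall 0 ‖T‖ := by
    simpa [hx.1 k] using norm_jointForm_le T (x k)
  obtain ⟨μ, -, φ, hφ, hlim⟩ := (isCompact_closedBall _ _).tendsto_subseq hmem
  exact ⟨μ, mem_jointEssNumRange_iff.2 ⟨x ∘ φ, hx.comp φ hφ.injective, hlim⟩, φ, hlim⟩

theorem jointEssNumRange_nonempty (T : Fin n → H →L[ℂ] H)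
    (hdim : ¬FiniteDimensional ℂ H) : (jointEssNumRange T).Nonempty := by
  obtain ⟨x, hx⟩ := exists_orthonormal_of_not_finiteDimensional hdim
  obtain ⟨μ, hμ, -⟩ := exists_subseq_tendsto_mem_jointEssNumRange T hx
  exact ⟨μ, hμ⟩

theorem mem_jointEssNumRange_of_forall_exists_norm_sub_lt
    (h : ∀ (V : Submodule ℂ H) [FiniteDimensional ℂ V] (ε : ℝ), 0 < ε →
      ∃ z ∈ Vᗮ, ‖z‖ = 1 ∧ ‖jointForm T z - lam‖ < ε) :
    lam ∈ jointEssNumRange T := by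
  obtain ⟨z, hz, hlim⟩ := exists_orthonormal_of_forall_finite (𝕜 := ℂ)
    (P := fun m (_ : Set H) z => ‖jointForm T z - lam‖ < 1 / ((m : ℝ) + 1)) fun m s hs =>
      have := FiniteDimensional.span_of_finite ℂ hs
      h (Submodule.span ℂ s) _ (by positivity)
  exact mem_jointEssNumRange_iff.2 ⟨z, hz, tendsto_iff_norm_sub_tendsto_zero.2 <|
    squeeze_zero (fun _ => norm_nonneg _) (fun m => (hlim m).le)
      tendsto_one_div_add_atTop_nhds_zero_nat⟩

variable [CompleteSpace H]

theorem jointEssNumRange_subset_add_of_isCompactOperator {K : Fin n → H →L[ℂ] H}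
    (hK : ∀ j, IsCompactOperator (K j)) : jointEssNumRange T ⊆ jointEssNumRange (T + K) := by
  rintro lam ⟨x, hx, hT⟩
  refine ⟨x, hx, fun j => ?_⟩
  have hKx : Tendsto (fun k => K j (x k)) atTop (nhds 0) :=
    Nat.cofinite_eq_atTop ▸ tendsto_compactOperator_apply_of_orthonormal (hK j) hx
  have hform : Tendsto (fun k => ⟪K j (x k), x k⟫) atTop (nhds 0) := by
    refine squeeze_zero_norm (fun k => ?_) (tendsto_zero_iff_norm_tendsto_zero.1 hKx)
    simpa [hx.1 k] using norm_inner_le_norm (𝕜 := ℂ) (K j (x k)) (x k)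
  simpa [inner_add_left] using (hT j).add hform

theorem exists_mem_orthogonal_norm_jointForm_sub_lt (hlam : lam ∈ jointEssNumRange T)
    (V : Submodule ℂ H) [FiniteDimensional ℂ V] {ε : ℝ} (hε : 0 < ε) :
    ∃ z ∈ Vᗮ, ‖z‖ = 1 ∧ ‖jointForm T z - lam‖ < ε := by
  obtain ⟨x, hx, hlim⟩ := mem_jointEssNumRange_iff.1 hlam
  have hproj : Tendsto (fun k => ‖V.starProjection (x k)‖) atTop (nhds 0) := by
    rw [← tendsto_zero_iff_norm_tendsto_zero, ← Nat.cofinite_eq_atTop]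
    exact tendsto_compactOperator_apply_of_orthonormal
      (isCompactOperator_of_forall_mem V V.starProjection_apply_mem) hx
  have herr : Tendsto (fun k => ‖T‖ * 2 * (2 * ‖V.starProjection (x k)‖) +
      ‖jointForm T (x k) - lam‖) atTop (nhds 0) := by
    simpa using ((hproj.const_mul 2).const_mul (‖T‖ * 2)).add
      (tendsto_iff_norm_sub_tendsto_zero.1 hlim)
  obtain ⟨k, hk1, hkε⟩ := ((hproj.eventually (gt_mem_nhds one_pos)).and
    (herr.eventually (gt_mem_nhds hε))).exists
  obtain ⟨z, hzV, hz1, hzx⟩ := exists_unit_mem_orthogonal_norm_sub_le V (hx.1 k) hk1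
  refine ⟨z, hzV, hz1, ?_⟩
  calc ‖jointForm T z - lam‖
      ≤ ‖jointForm T z - jointForm T (x k)‖ + ‖jointForm T (x k) - lam‖ :=
        norm_sub_le_norm_sub_add_norm_sub ..
    _ ≤ ‖T‖ * 2 * (2 * ‖V.starProjection (x k)‖) + ‖jointForm T (x k) - lam‖ := by
        gcongr
        refine (norm_jointForm_sub_le T z (x k)).trans ?_
        rw [hz1, hx.1 k, one_add_one_eq_two]
        gcongr
    _ < ε := hkε

end JointEssNumRange

section JointlyDiagonal

variable {H : Type*} [NormedAddCommGroup H] [InnerProductSpace ℂ H] {ι κ : Type*}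
  {T : ι → H →L[ℂ] H} {z : κ → H}

/-- The family `z` is orthonormal and the compressions of all `T j` to its span are diagonal with
respect to it. Along such families the joint quadratic form turns Pythagorean sums into convex
combinations. -/
structure IsJointlyDiagonal (T : ι → H →L[ℂ] H) (z : κ → H) : Prop where
  orthonormal : Orthonormal ℂ z
  inner_map_eq_zero : ∀ j, Pairwise fun i k => ⟪T j (z i), z k⟫ = 0

theorem inner_map_sum_sqrt_smul {S : H →L[ℂ] H} (hS : Pairwise fun i k => ⟪S (z i), z k⟫ = 0)
    {s : Finset κ} {w : κ → ℝ} (hw : ∀ i ∈ s, 0 ≤ w i) :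
    ⟪S (∑ i ∈ s, (√(w i) : ℂ) • z i), ∑ i ∈ s, (√(w i) : ℂ) • z i⟫ =
      ∑ i ∈ s, (w i : ℂ) * ⟪S (z i), z i⟫ := by
  rw [map_sum, sum_inner]
  refine Finset.sum_congr rfl fun i hi => ?_
  rw [inner_sum, Finset.sum_eq_single_of_mem i hi]
  · rw [map_smul, inner_smul_left, inner_smul_right, Complex.conj_ofReal, ← mul_assoc,
      ← Complex.ofReal_mul, Real.mul_self_sqrt (hw i hi)]
  · intro k _ hki
    rw [map_smul, inner_smul_left, inner_smul_right, hS hki.symm, mul_zero, mul_zero]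

namespace IsJointlyDiagonal

theorem norm_sum_sqrt_smul (hz : IsJointlyDiagonal T z) {s : Finset κ} {w : κ → ℝ}
    (hw : ∀ i ∈ s, 0 ≤ w i) (hw1 : ∑ i ∈ s, w i = 1) : ‖∑ i ∈ s, (√(w i) : ℂ) • z i‖ = 1 := by
  have hid := inner_map_sum_sqrt_smul (S := .id ℂ H) (fun _ _ h => hz.orthonormal.2 h) hw
  simp only [ContinuousLinearMap.id_apply, inner_self_eq_norm_sq_to_K, hz.orthonormal.1,
    RCLike.ofReal_one, one_pow, mul_one, ← Complex.ofReal_sum, hw1] at hid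
  exact (pow_eq_one_iff_of_nonneg (norm_nonneg _) two_ne_zero).1 (Complex.ofReal_injective
    (by simpa using hid))

theorem jointForm_sum_sqrt_smul (hz : IsJointlyDiagonal T z) {s : Finset κ} {w : κ → ℝ}
    (hw : ∀ i ∈ s, 0 ≤ w i) :
    jointForm T (∑ i ∈ s, (√(w i) : ℂ) • z i) = ∑ i ∈ s, w i • jointForm T (z i) := by
  ext j
  simpa [jointForm] using inner_map_sum_sqrt_smul (hz.inner_map_eq_zero j) hw

theorem exists_jointForm_eq_of_mem_convexHull (hz : IsJointlyDiagonal T z) {μ : ι → ℂ}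
    (hμ : μ ∈ convexHull ℝ (Set.range fun i => jointForm T (z i))) :
    ∃ x ∈ Submodule.span ℂ (Set.range z), ‖x‖ = 1 ∧ jointForm T x = μ := by
  rw [convexHull_range_eq_exists_affineCombination] at hμ
  obtain ⟨s, w, hw, hw1, rfl⟩ := hμ
  refine ⟨∑ i ∈ s, (√(w i) : ℂ) • z i, Submodule.sum_smul_mem _ _ fun i _ =>
    Submodule.subset_span ⟨i, rfl⟩, hz.norm_sum_sqrt_smul hw hw1, ?_⟩
  rw [hz.jointForm_sum_sqrt_smul hw, Finset.affineCombination_eq_linear_combination _ _ _ hw1]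

variable {y z : H} {a b : ℝ}

theorem norm_sqrt_smul_add (h : IsJointlyDiagonal T ![y, z]) (ha : 0 ≤ a) (hb : 0 ≤ b)
    (hab : a + b = 1) : ‖(√a : ℂ) • y + (√b : ℂ) • z‖ = 1 := by
  simpa using h.norm_sum_sqrt_smul (s := .univ) (w := ![a, b])
    (by simp [Fin.forall_fin_two, ha, hb]) (by simpa using hab)

theorem jointForm_sqrt_smul_add (h : IsJointlyDiagonal T ![y, z]) (ha : 0 ≤ a) (hb : 0 ≤ b) :
    jointForm T ((√a : ℂ) • y + (√b : ℂ) • z) = a • jointForm T y + b • jointForm T z := by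
  simpa using h.jointForm_sum_sqrt_smul (s := .univ) (w := ![a, b])
    (by simp [Fin.forall_fin_two, ha, hb])

end IsJointlyDiagonal

variable [CompleteSpace H]

/-- The span of `s` and its images under all `T j` and their adjoints. Choosing the next vector
orthogonal to it keeps a family jointly diagonal. -/
def jointSpan (T : ι → H →L[ℂ] H) (s : Set H) : Submodule ℂ H :=
  Submodule.span ℂ (s ∪ ⋃ j, (T j '' s ∪ (T j).adjoint '' s))

theorem span_le_jointSpan (s : Set H) : Submodule.span ℂ s ≤ jointSpan T s :=
  Submodule.span_mono Set.subset_union_left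

theorem jointSpan_mono {s t : Set H} (h : s ⊆ t) : jointSpan T s ≤ jointSpan T t := by
  unfold jointSpan
  gcongr

theorem finiteDimensional_jointSpan [Finite ι] {s : Set H} (hs : s.Finite) :
    FiniteDimensional ℂ (jointSpan T s) :=
  FiniteDimensional.span_of_finite ℂ <|
    hs.union <| Set.finite_iUnion fun _ => (hs.image _).union (hs.image _)

theorem isJointlyDiagonal_of_forall_lt [LinearOrder κ] (hnorm : ∀ i, ‖z i‖ = 1)
    (hz : ∀ ⦃i k⦄, i < k → z k ∈ (jointSpan T {z i})ᗮ) : IsJointlyDiagonal T z where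
  orthonormal := orthonormal_of_forall_lt hnorm fun i _ hik =>
    hz hik _ (Submodule.subset_span (.inl rfl))
  inner_map_eq_zero j i k hne := by
    rcases hne.lt_or_gt with hik | hki
    · exact hz hik _ (Submodule.subset_span (.inr (Set.mem_iUnion.2 ⟨j, .inl ⟨z i, rfl, rfl⟩⟩)))
    · rw [← ContinuousLinearMap.adjoint_inner_right, inner_eq_zero_symm]
      exact hz hki _ (Submodule.subset_span (.inr (Set.mem_iUnion.2 ⟨j, .inr ⟨z k, rfl, rfl⟩⟩)))

theorem isJointlyDiagonal_pair {y z : H} (hy : ‖y‖ = 1) (hz : ‖z‖ = 1)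
    (hyz : z ∈ (jointSpan T {y})ᗮ) : IsJointlyDiagonal T ![y, z] := by
  refine isJointlyDiagonal_of_forall_lt (Fin.forall_fin_two.2 ⟨hy, hz⟩) fun i k hik => ?_
  obtain ⟨rfl, rfl⟩ : i = 0 ∧ k = 1 := by lia
  exact hyz

end JointlyDiagonal

section Interior

variable {H : Type*} [NormedAddCommGroup H] [InnerProductSpace ℂ H] [CompleteSpace H] {n : ℕ}
  {T : Fin n → H →L[ℂ] H}

theorem exists_isJointlyDiagonal_norm_jointForm_sub_lt {p : ℕ → Fin n → ℂ}
    (hp : ∀ i, p i ∈ jointEssNumRange T) {ε : ℕ → ℝ} (hε : ∀ i, 0 < ε i) (V : Submodule ℂ H)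
    [FiniteDimensional ℂ V] :
    ∃ z : ℕ → H, IsJointlyDiagonal T z ∧ (∀ i, z i ∈ Vᗮ) ∧
      ∀ i, ‖jointForm T (z i) - p i‖ < ε i := by
  have hstep (m : ℕ) (s : Set H) (hs : s.Finite) : ∃ z ∈ (Submodule.span ℂ s)ᗮ, ‖z‖ = 1 ∧
      z ∈ (V ⊔ jointSpan T s)ᗮ ∧ ‖jointForm T z - p m‖ < ε m := by
    have := finiteDimensional_jointSpan (T := T) hs
    obtain ⟨z, hzV, hz1, hzp⟩ := exists_mem_orthogonal_norm_jointForm_sub_lt (hp m)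
      (V ⊔ jointSpan T s) (hε m)
    exact ⟨z, Submodule.orthogonal_le ((span_le_jointSpan s).trans le_sup_right) hzV, hz1,
      hzV, hzp⟩
  obtain ⟨z, hz, hzP⟩ := exists_orthonormal_of_forall_finite hstep
  refine ⟨z, isJointlyDiagonal_of_forall_lt hz.1 fun i k hik => ?_,
    fun i => Submodule.orthogonal_le le_sup_left (hzP i).1, fun i => (hzP i).2⟩
  have hle : jointSpan T {z i} ≤ V ⊔ jointSpan T (z '' Set.Iio k) :=
    le_sup_of_le_right (jointSpan_mono (Set.singleton_subset_iff.2 ⟨i, hik, rfl⟩))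
  exact Submodule.orthogonal_le hle (hzP k).1

theorem exists_mem_orthogonal_jointForm_eq {μ : Fin n → ℂ}
    (hμ : μ ∈ interior (jointEssNumRange T)) (V : Submodule ℂ H) [FiniteDimensional ℂ V] :
    ∃ z ∈ Vᗮ, ‖z‖ = 1 ∧ jointForm T z = μ := by
  obtain ⟨p, hp, hclosure⟩ :=
    exists_seq_subset_closure_range (Set.nonempty_of_mem (interior_subset hμ))
  obtain ⟨z, hz, hzV, hzp⟩ := exists_isJointlyDiagonal_norm_jointForm_sub_lt hp
    (fun i => Nat.one_div_pos_of_nat (α := ℝ) (n := i)) V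
  have hdense : jointEssNumRange T ⊆
      closure (convexHull ℝ (Set.range fun i => jointForm T (z i))) := by
    refine (hclosure _ ?_).trans (closure_mono (subset_convexHull ℝ _))
    refine squeeze_zero (fun _ => dist_nonneg) (fun i => ?_)
      tendsto_one_div_add_atTop_nhds_zero_nat
    exact (dist_eq_norm _ _).trans_le (hzp i).le
  have hhull : μ ∈ convexHull ℝ (Set.range fun i => jointForm T (z i)) := by
    have := interior_mono hdense hμ
    rw [interior_closure_eq_interior_of_convex (convex_convexHull ℝ _)] at this
    exact interior_subset this
  obtain ⟨x, hx, hx1, hxμ⟩ := hz.exists_jointForm_eq_of_mem_convexHull hhull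
  exact ⟨x, Submodule.span_le.2 (Set.range_subset_iff.2 hzV) hx, hx1, hxμ⟩

theorem convex_jointEssNumRange (T : Fin n → H →L[ℂ] H) : Convex ℝ (jointEssNumRange T) := by
  intro μ hμ ν hν a b ha hb hab
  refine mem_jointEssNumRange_of_forall_exists_norm_sub_lt fun V _ ε hε => ?_
  obtain ⟨y, hyV, hy1, hyμ⟩ := exists_mem_orthogonal_norm_jointForm_sub_lt hμ V hε
  have := finiteDimensional_jointSpan (T := T) (Set.finite_singleton y)
  obtain ⟨z, hzV, hz1, hzν⟩ :=
    exists_mem_orthogonal_norm_jointForm_sub_lt hν (V ⊔ jointSpan T {y}) hε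
  rw [← Submodule.inf_orthogonal] at hzV
  have hpair := isJointlyDiagonal_pair hy1 hz1 hzV.2
  refine ⟨(√a : ℂ) • y + (√b : ℂ) • z,
    add_mem (Submodule.smul_mem _ _ hyV) (Submodule.smul_mem _ _ hzV.1),
    hpair.norm_sqrt_smul_add ha hb hab, ?_⟩
  have herr : jointForm T ((√a : ℂ) • y + (√b : ℂ) • z) - (a • μ + b • ν) =
      a • (jointForm T y - μ) + b • (jointForm T z - ν) := by
    rw [hpair.jointForm_sqrt_smul_add ha hb]
    module
  rw [herr, ← mem_ball_zero_iff]
  exact convex_ball 0 ε (mem_ball_zero_iff.2 hyμ) (mem_ball_zero_iff.2 hzν) ha hb hab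

theorem exists_pos_forall_exists_jointForm_eq_inner_eq {lam : Fin n → ℂ}
    (hlam : lam ∈ interior (jointEssNumRange T)) :
    ∃ c : ℝ, 0 < c ∧ ∀ (V : Submodule ℂ H) [FiniteDimensional ℂ V], ∀ y ∈ Vᗮ, ‖y‖ = 1 →
      ∃ u ∈ Vᗮ, ‖u‖ = 1 ∧ jointForm T u = lam ∧ ⟪u, y⟫ = c := by
  obtain ⟨a, ha0, ha1, hcombo⟩ :=
    exists_forall_norm_le_exists_combo_eq (isOpen_interior.mem_nhds hlam) ‖T‖
  refine ⟨√a, Real.sqrt_pos.2 ha0, fun V _ y hyV hy1 => ?_⟩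
  obtain ⟨μ, hμ, hμlam⟩ := hcombo (jointForm T y) (by simpa [hy1] using norm_jointForm_le T y)
  have := finiteDimensional_jointSpan (T := T) (Set.finite_singleton y)
  obtain ⟨z, hzV, hz1, rfl⟩ := exists_mem_orthogonal_jointForm_eq hμ (V ⊔ jointSpan T {y})
  rw [← Submodule.inf_orthogonal] at hzV
  have hpair := isJointlyDiagonal_pair hy1 hz1 hzV.2
  have ha' : 0 ≤ 1 - a := sub_nonneg.2 ha1.le
  refine ⟨(√a : ℂ) • y + (√(1 - a) : ℂ) • z,
    add_mem (Submodule.smul_mem _ _ hyV) (Submodule.smul_mem _ _ hzV.1),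
    hpair.norm_sqrt_smul_add ha0.le ha' (add_sub_cancel a 1),
    (hpair.jointForm_sqrt_smul_add ha0.le ha').trans hμlam, ?_⟩
  have hzy : ⟪z, y⟫ = 0 := Submodule.inner_left_of_mem_orthogonal
    (span_le_jointSpan _ (Submodule.mem_span_singleton_self y)) hzV.2
  simp [hzy, hy1]

theorem exists_pos_forall_exists_jointForm_eq_mul_norm_inner_le {lam : Fin n → ℂ}
    (hlam : lam ∈ interior (jointEssNumRange T)) :
    ∃ c : ℝ, 0 < c ∧ ∀ (V : Submodule ℂ H) [FiniteDimensional ℂ V] (e : H),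
      ∃ u ∈ Vᗮ, ‖u‖ = 1 ∧ jointForm T u = lam ∧
        ∀ w ∈ Vᗮ, c * ‖⟪w, e⟫‖ ≤ ‖w‖ * ‖⟪u, e⟫‖ := by
  obtain ⟨c, hc, hstep⟩ := exists_pos_forall_exists_jointForm_eq_inner_eq hlam
  refine ⟨c, hc, fun V _ e => ?_⟩
  set y := e - V.starProjection e with hy
  have hyV : y ∈ Vᗮ := V.sub_starProjection_mem_orthogonal e
  have hinner : ∀ w ∈ Vᗮ, ⟪w, e⟫ = ⟪w, y⟫ := fun w hw => by
    rw [hy, inner_sub_right, V.inner_left_of_mem_orthogonal (V.starProjection_apply_mem e) hw,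
      sub_zero]
  rcases eq_or_ne y 0 with hy0 | hy0
  · obtain ⟨u, huV, hu1, hu⟩ := exists_mem_orthogonal_jointForm_eq hlam V
    exact ⟨u, huV, hu1, hu, fun w hw => by simp [hinner w hw, hinner u huV, hy0]⟩
  obtain ⟨u, huV, hu1, hu, huy⟩ :=
    hstep V ((‖y‖⁻¹ : ℂ) • y) (Submodule.smul_mem _ _ hyV) (norm_smul_inv_norm hy0)
  refine ⟨u, huV, hu1, hu, fun w hw => ?_⟩
  have hnorm : ‖⟪u, y⟫‖ = c * ‖y‖ := by
    rw [inner_smul_right, inv_mul_eq_iff_eq_mul₀ (by simpa using hy0)] at huy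
    rw [huy, norm_mul, Complex.norm_real, Complex.norm_real, norm_norm,
      Real.norm_of_nonneg hc.le, mul_comm]
  calc c * ‖⟪w, e⟫‖ ≤ c * (‖w‖ * ‖y‖) := by
        rw [hinner w hw]
        gcongr
        exact norm_inner_le_norm w y
    _ = ‖w‖ * ‖⟪u, e⟫‖ := by rw [hinner u huV, hnorm, mul_left_comm]

theorem interior_jointEssNumRange_subset_constDiag [TopologicalSpace.SeparableSpace H]
    (T : Fin n → H →L[ℂ] H) : interior (jointEssNumRange T) ⊆ constDiag T := by
  intro lam hlam
  obtain ⟨c, hc, hstep⟩ := exists_pos_forall_exists_jointForm_eq_mul_norm_inner_le hlam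
  obtain ⟨d, hd⟩ := TopologicalSpace.exists_dense_seq H
  obtain ⟨u, hu, huP⟩ := exists_orthonormal_of_forall_finite (𝕜 := ℂ)
    (P := fun m s u => jointForm T u = lam ∧ ∀ w ∈ (Submodule.span ℂ s)ᗮ,
      c * ‖⟪w, d m.unpair.1⟫‖ ≤ ‖w‖ * ‖⟪u, d m.unpair.1⟫‖) fun m s hs =>
      have := FiniteDimensional.span_of_finite ℂ hs
      hstep (Submodule.span ℂ s) (d m.unpair.1)
  have hbot : (Submodule.span ℂ (Set.range u))ᗮ = ⊥ := by
    refine orthogonal_span_range_eq_bot_of_frequently_le hu hd hc ?_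
    rintro _ ⟨k, rfl⟩
    refine (frequently_unpair_fst_eq k).mono ?_
    rintro m rfl
    exact (huP m).2
  refine ⟨.mkOfOrthogonalEqBot hu hbot, fun k j => ?_⟩
  rw [HilbertBasis.coe_mkOfOrthogonalEqBot]
  exact congrFun (huP k).1 j

end Interior

section PositiveCompact

variable {𝕜 E ι : Type*} [RCLike 𝕜] [NormedAddCommGroup E] [InnerProductSpace 𝕜 E]

theorem hasSum_norm_inner_sq_re_inner_tsum_rankOne [CompleteSpace E] {v : ι → E}
    (hv : Summable fun i => ‖v i‖ ^ 2) (x : E) :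
    HasSum (fun i => ‖inner 𝕜 (v i) x‖ ^ 2)
      (RCLike.re (inner 𝕜 ((∑' i, InnerProductSpace.rankOne 𝕜 (v i) (v i)) x) x)) := by
  have hsum : Summable fun i => InnerProductSpace.rankOne 𝕜 (v i) (v i) :=
    .of_norm (by simpa [sq] using hv)
  have happly := (innerSL 𝕜 x).hasSum ((ContinuousLinearMap.apply 𝕜 E x).hasSum hsum.hasSum)
  rw [inner_re_symm]
  simpa [InnerProductSpace.rankOne_apply, inner_smul_right, inner_mul_symm_re_eq_norm,
    norm_inner_symm x, sq, -RCLike.mul_re] using RCLike.hasSum_re 𝕜 happly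

theorem exists_seq_summable_norm_sq_forall_inner_eq_zero (𝕜 E : Type*) [RCLike 𝕜]
    [NormedAddCommGroup E] [InnerProductSpace 𝕜 E] [TopologicalSpace.SeparableSpace E] :
    ∃ v : ℕ → E, (Summable fun i => ‖v i‖ ^ 2) ∧ ∀ x, (∀ i, inner 𝕜 (v i) x = 0) → x = 0 := by
  obtain ⟨d, hd⟩ := TopologicalSpace.exists_dense_seq E
  have ha (i : ℕ) : 0 < (1 / 2 : ℝ) ^ i / (1 + ‖d i‖) := by positivity
  refine ⟨fun i => (((1 / 2 : ℝ) ^ i / (1 + ‖d i‖) : ℝ) : 𝕜) • d i,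
    summable_geometric_two.of_nonneg_of_le (fun _ => by positivity) fun i => ?_, fun x hx => ?_⟩
  · rw [norm_smul, RCLike.norm_of_nonneg (ha i).le, div_mul_eq_mul_div, mul_div_assoc]
    have : ‖d i‖ / (1 + ‖d i‖) ≤ 1 := (div_le_one (by positivity)).2 (by linarith)
    calc ((1 / 2 : ℝ) ^ i * (‖d i‖ / (1 + ‖d i‖))) ^ 2 ≤ ((1 / 2) ^ i * 1) ^ 2 := by gcongr
      _ ≤ (1 / 2) ^ i := by
        rw [mul_one]
        exact pow_le_of_le_one (by positivity) (pow_le_one₀ (by norm_num) (by norm_num)) two_ne_zero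
  · refine hd.eq_zero_of_inner_right 𝕜 fun i => ?_
    have := hx i
    rwa [inner_smul_left, RCLike.conj_ofReal, mul_eq_zero_iff_left] at this
    exact_mod_cast (ha i).ne'

theorem exists_isSelfAdjoint_isCompactOperator_re_inner_pos (𝕜 E : Type*) [RCLike 𝕜]
    [NormedAddCommGroup E] [InnerProductSpace 𝕜 E] [CompleteSpace E]
    [TopologicalSpace.SeparableSpace E] :
    ∃ K : E →L[𝕜] E, IsSelfAdjoint K ∧ IsCompactOperator K ∧
      ∀ x, x ≠ 0 → 0 < RCLike.re (inner 𝕜 (K x) x) := by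
  obtain ⟨v, hv, hv0⟩ := exists_seq_summable_norm_sq_forall_inner_eq_zero 𝕜 E
  refine ⟨∑' i, InnerProductSpace.rankOne 𝕜 (v i) (v i), ?_, ?_, fun x hx => ?_⟩
  · rw [IsSelfAdjoint, tsum_star]
    exact tsum_congr fun i => (InnerProductSpace.isPositive_rankOne_self (v i)).isSelfAdjoint
  · exact tsum_mem (s := compactOperator (RingHom.id 𝕜) E E) isClosed_setOfPred_isCompactOperator
      fun i => isCompactOperator_of_forall_mem (𝕜 ∙ v i) fun x =>
        Submodule.smul_mem _ _ (Submodule.mem_span_singleton_self (v i))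
  · have hform := hasSum_norm_inner_sq_re_inner_tsum_rankOne (𝕜 := 𝕜) hv x
    obtain ⟨i, hi⟩ : ∃ i, inner 𝕜 (v i) x ≠ 0 := by
      contrapose! hx
      exact hv0 x hx
    rw [← hform.tsum_eq]
    exact hform.summable.tsum_pos (fun _ => by positivity) i (by positivity)

end PositiveCompact

section CompactDomination

variable {H : Type*} [NormedAddCommGroup H] [InnerProductSpace ℂ H] [CompleteSpace H]
  {S : H →L[ℂ] H}

/-- The truncation `(S - ε)₊` of a self-adjoint operator `S`: the part of `S` above level `ε`,
shifted down to `0`. -/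
noncomputable def posPartAbove (S : H →L[ℂ] H) (ε : ℝ) : H →L[ℂ] H :=
  cfc (fun t : ℝ => max (t - ε) 0) S

theorem posPartAbove_nonneg (S : H →L[ℂ] H) (ε : ℝ) : 0 ≤ posPartAbove S ε :=
  cfc_nonneg fun _ _ => le_max_right _ _

theorem le_posPartAbove_zero (hS : IsSelfAdjoint S) : S ≤ posPartAbove S 0 :=
  calc S = cfc (fun t : ℝ => t) S := (cfc_id' ℝ S).symm
    _ ≤ posPartAbove S 0 := cfc_mono fun t _ => by simp

theorem norm_posPartAbove_sub_le (S : H →L[ℂ] H) {ε : ℝ} (hε : 0 ≤ ε) :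
    ‖posPartAbove S ε - posPartAbove S 0‖ ≤ ε := by
  rw [posPartAbove, posPartAbove, ← cfc_sub ..]
  refine norm_cfc_le hε fun t _ => ?_
  simpa [abs_of_nonneg hε] using abs_max_sub_max_le_abs (t - ε) (t - 0) 0

theorem mul_posPartAbove (hS : IsSelfAdjoint S) (ε : ℝ) :
    S * posPartAbove S ε = posPartAbove S ε * posPartAbove S ε + ε • posPartAbove S ε := by
  have hfun (t : ℝ) :
      t * max (t - ε) 0 = max (t - ε) 0 * max (t - ε) 0 + ε * max (t - ε) 0 := by
    rcases max_cases (t - ε) 0 with ⟨h, -⟩ | ⟨h, -⟩ <;> rw [h] <;> ring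
  calc S * posPartAbove S ε = cfc (fun t : ℝ => t * max (t - ε) 0) S := by
        rw [cfc_mul .., cfc_id' ℝ S, posPartAbove]
    _ = posPartAbove S ε * posPartAbove S ε + ε • posPartAbove S ε := by
        rw [posPartAbove, ← cfc_mul .., ← cfc_const_mul .., ← cfc_add ..]
        simp only [hfun]

theorem le_re_inner_of_mem_range_posPartAbove (hS : IsSelfAdjoint S) {ε : ℝ} {x : H}
    (hx : x ∈ (posPartAbove S ε).range) : ε * ‖x‖ ^ 2 ≤ (⟪S x, x⟫).re := by
  obtain ⟨y, hy⟩ := hx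
  have hSx : S x = posPartAbove S ε x + ε • x := by
    rw [← hy]
    exact DFunLike.congr_fun (mul_posPartAbove hS ε) y
  have hpos := ((ContinuousLinearMap.nonneg_iff_isPositive _).1
    (posPartAbove_nonneg S ε)).re_inner_nonneg_left x
  rw [hSx, inner_add_left, Complex.add_re, inner_smul_left_eq_smul, Complex.smul_re,
    ← RCLike.re_eq_complex_re, inner_self_eq_norm_sq, smul_eq_mul]
  exact le_add_of_nonneg_left hpos

theorem finiteDimensional_range_posPartAbove (hS : IsSelfAdjoint S) {ε : ℝ}
    (h : ∀ x : ℕ → H, Orthonormal ℂ x → ∃ k, (⟪S (x k), x k⟫).re < ε) :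
    FiniteDimensional ℂ (posPartAbove S ε).range := by
  by_contra hinf
  obtain ⟨x, hx⟩ := exists_orthonormal_of_not_finiteDimensional hinf
  obtain ⟨k, hk⟩ := h _ (hx.comp_linearIsometry (Submodule.subtypeₗᵢ _))
  have hle := le_re_inner_of_mem_range_posPartAbove hS (x k).2
  rw [Submodule.norm_coe, hx.1 k, one_pow, mul_one] at hle
  exact hk.not_ge hle

theorem exists_isCompactOperator_le (hS : IsSelfAdjoint S)
    (h : ∀ x : ℕ → H, Orthonormal ℂ x → ∀ ε > 0, ∃ k, (⟪S (x k), x k⟫).re < ε) :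
    ∃ C : H →L[ℂ] H, IsCompactOperator C ∧ S ≤ C := by
  refine ⟨posPartAbove S 0, ?_, le_posPartAbove_zero hS⟩
  have hlim : Tendsto (fun i : ℕ => posPartAbove S (1 / ((i : ℝ) + 1))) atTop
      (nhds (posPartAbove S 0)) :=
    tendsto_iff_norm_sub_tendsto_zero.2 <| squeeze_zero (fun _ => norm_nonneg _)
      (fun _ => norm_posPartAbove_sub_le S (by positivity))
      tendsto_one_div_add_atTop_nhds_zero_nat
  refine isCompactOperator_of_tendsto hlim (.of_forall fun i => ?_)
  have := finiteDimensional_range_posPartAbove hS fun x hx =>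
    h x hx (1 / ((i : ℝ) + 1)) (by positivity)
  exact isCompactOperator_of_forall_mem _ (LinearMap.mem_range_self _)

theorem exists_isSelfAdjoint_isCompactOperator_re_inner_lt [TopologicalSpace.SeparableSpace H]
    (hS : IsSelfAdjoint S)
    (h : ∀ x : ℕ → H, Orthonormal ℂ x → ∀ ε > 0, ∃ k, (⟪S (x k), x k⟫).re < ε) :
    ∃ D : H →L[ℂ] H, IsSelfAdjoint D ∧ IsCompactOperator D ∧
      ∀ x, x ≠ 0 → (⟪S x, x⟫).re < (⟪D x, x⟫).re := by
  obtain ⟨C, hC, hSC⟩ := exists_isCompactOperator_le hS h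
  obtain ⟨K, hKadj, hK, hpos⟩ := exists_isSelfAdjoint_isCompactOperator_re_inner_pos ℂ H
  have hpossub : (C - S).IsPositive := hSC
  have hCadj : IsSelfAdjoint C := by
    simpa using hpossub.isSelfAdjoint.add hS
  refine ⟨C + K, hCadj.add hKadj, hC.add hK, fun x hx => ?_⟩
  have h1 := hpos x hx
  have h2 := hpossub.re_inner_nonneg_left x
  simp only [sub_apply, add_apply, inner_sub_left, inner_add_left, map_sub,
    RCLike.re_eq_complex_re, Complex.add_re] at h1 h2 ⊢
  linarith

end CompactDomination

section Avoidance

variable {H : Type*} [NormedAddCommGroup H] [InnerProductSpace ℂ H] {n : ℕ}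
  {T : Fin n → H →L[ℂ] H}

theorem exists_inner_eq_apply_jointForm {ι : Type*} [Finite ι] (T : ι → H →L[ℂ] H)
    (g : (ι → ℂ) →ₗ[ℂ] ℂ) : ∃ A : H →L[ℂ] H, ∀ x, ⟪A x, x⟫ = g (jointForm T x) := by
  classical
  have := Fintype.ofFinite ι
  refine ⟨∑ j, starRingEnd ℂ (g fun k => if j = k then 1 else 0) • T j, fun x => ?_⟩
  rw [g.pi_apply_eq_sum_univ]
  simp only [sum_apply, smul_apply, sum_inner, inner_smul_left, Complex.conj_conj, smul_eq_mul,
    jointForm, mul_comm]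

theorem exists_apply_jointForm_lt_of_orthonormal {f : (Fin n → ℂ) →L[ℝ] ℝ} {b : ℝ}
    (hf : ∀ μ ∈ jointEssNumRange T, f μ ≤ b) {x : ℕ → H} (hx : Orthonormal ℂ x) {ε : ℝ}
    (hε : 0 < ε) : ∃ k, f (jointForm T (x k)) < b + ε := by
  obtain ⟨μ, hμ, φ, hlim⟩ := exists_subseq_tendsto_mem_jointEssNumRange T hx
  have hfμ : f μ < b + ε := (hf μ hμ).trans_lt (lt_add_of_pos_right b hε)
  obtain ⟨k, hk⟩ := (((f.continuous.tendsto μ).comp hlim).eventually (gt_mem_nhds hfμ)).exists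
  exact ⟨φ k, hk⟩

variable [CompleteSpace H]

theorem exists_isSelfAdjoint_re_inner_eq_apply_jointForm {ι : Type*} [Finite ι]
    (T : ι → H →L[ℂ] H) (f : (ι → ℂ) →L[ℝ] ℝ) :
    ∃ S : H →L[ℂ] H, IsSelfAdjoint S ∧ ∀ x, (⟪S x, x⟫).re = f (jointForm T x) := by
  obtain ⟨A, hA⟩ := exists_inner_eq_apply_jointForm T (Module.Dual.extendRCLike f.toLinearMap)
  refine ⟨realPart A, (realPart A).2, fun x => ?_⟩
  have hadj : (⟪A.adjoint x, x⟫).re = (⟪A x, x⟫).re := by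
    rw [ContinuousLinearMap.adjoint_inner_left]
    exact inner_re_symm (𝕜 := ℂ) _ _
  have hre : (⟪A x, x⟫).re = f (jointForm T x) := by
    rw [hA]
    exact Module.Dual.re_extendRCLike_apply (𝕜 := ℂ) f.toLinearMap _
  rw [realPart_apply_coe, ContinuousLinearMap.star_eq_adjoint, smul_apply, add_apply,
    inner_smul_left_eq_smul, inner_add_left, Complex.smul_re, Complex.add_re, hadj, hre]
  simp [← two_mul]

variable [TopologicalSpace.SeparableSpace H]

theorem exists_isSelfAdjoint_isCompactOperator_apply_jointForm_lt {f : (Fin n → ℂ) →L[ℝ] ℝ}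
    {b : ℝ} (hf : ∀ μ ∈ jointEssNumRange T, f μ ≤ b) :
    ∃ D : H →L[ℂ] H, IsSelfAdjoint D ∧ IsCompactOperator D ∧
      ∀ x, ‖x‖ = 1 → f (jointForm T x) < b + (⟪D x, x⟫).re := by
  obtain ⟨S, hS, hSf⟩ := exists_isSelfAdjoint_re_inner_eq_apply_jointForm T f
  have hshift (x : H) (hx : ‖x‖ = 1) : (⟪(S - b • 1) x, x⟫).re = f (jointForm T x) - b := by
    simp [inner_smul_left_eq_smul, hSf, hx]
  obtain ⟨D, hDadj, hD, hlt⟩ := exists_isSelfAdjoint_isCompactOperator_re_inner_lt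
    (hS.sub (.smul (.all b) (.one _))) fun x hx ε hε => by
      obtain ⟨k, hk⟩ := exists_apply_jointForm_lt_of_orthonormal hf hx hε
      exact ⟨k, by rw [hshift _ (hx.1 k)]; linarith⟩
  refine ⟨D, hDadj, hD, fun x hx => ?_⟩
  have := hlt x (norm_ne_zero_iff.1 (hx ▸ one_ne_zero))
  rw [hshift x hx] at this
  linarith

theorem exists_isCompactOperator_notMem_jointNumRange_add (hdim : ¬FiniteDimensional ℂ H)
    {lam : Fin n → ℂ} (hlam : lam ∉ interior (jointEssNumRange T)) :
    ∃ K : Fin n → H →L[ℂ] H, (∀ j, IsCompactOperator (K j)) ∧ lam ∉ jointNumRange (T + K) := by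
  obtain ⟨f, hf0, hf⟩ := exists_ne_zero_forall_apply_le_of_notMem_interior
    (convex_jointEssNumRange T) (jointEssNumRange_nonempty T hdim) hlam
  obtain ⟨D, hDadj, hD, hlt⟩ := exists_isSelfAdjoint_isCompactOperator_apply_jointForm_lt hf
  obtain ⟨v, hv⟩ := LinearMap.surjective (f := f.toLinearMap) (mod_cast hf0) 1
  refine ⟨fun j => -starRingEnd ℂ (v j) • D, fun j => hD.smul _, ?_⟩
  rintro ⟨x, hx, hxlam⟩
  have hreal : ((⟪D x, x⟫).re : ℂ) = ⟪D x, x⟫ :=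
    (ContinuousLinearMap.isSelfAdjoint_iff_isSymmetric.1 hDadj).coe_re_inner_apply_self x
  have hform : lam = jointForm T x - (⟪D x, x⟫).re • v := by
    ext j
    simp [← hxlam j, inner_smul_left, jointForm, hreal, sub_eq_add_neg, mul_comm]
  have hflam : f lam = f (jointForm T x) - (⟪D x, x⟫).re := by
    rw [hform, map_sub, map_smul, smul_eq_mul, show f v = 1 from hv, mul_one]
  linarith [hlt x hx]

end Avoidance

theorem constDiag_subset_jointNumRange {H : Type*} [NormedAddCommGroup H]
    [InnerProductSpace ℂ H] [CompleteSpace H] {n : ℕ} (T : Fin n → H →L[ℂ] H) :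
    constDiag T ⊆ jointNumRange T := by
  rintro lam ⟨u, hu⟩
  exact ⟨u 0, u.orthonormal.1 0, hu 0⟩

/-- `⋂_{𝒦 compact} W(𝒯 + 𝒦) = ⋂_{𝒦 compact} D_const(𝒯 + 𝒦) = Int W_e(𝒯)`. -/
theorem stmt_14 {H : Type*} [NormedAddCommGroup H] [InnerProductSpace ℂ H]
    [CompleteSpace H] [TopologicalSpace.SeparableSpace H]
    (hdim : ¬ FiniteDimensional ℂ H)
    {n : ℕ} (T : Fin n → H →L[ℂ] H) :
    (⋂ K ∈ {K : Fin n → H →L[ℂ] H | ∀ j, IsCompactOperator (K j)},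
        jointNumRange (fun j => T j + K j)) = interior (jointEssNumRange T) ∧
    (⋂ K ∈ {K : Fin n → H →L[ℂ] H | ∀ j, IsCompactOperator (K j)},
        constDiag (fun j => T j + K j)) = interior (jointEssNumRange T) := by
  set 𝒦 := {K : Fin n → H →L[ℂ] H | ∀ j, IsCompactOperator (K j)}
  have interior_subset_constDiag :
      interior (jointEssNumRange T) ⊆ ⋂ K ∈ 𝒦, constDiag (T + K) :=
    Set.subset_iInter₂ fun K hK =>
      (interior_mono (jointEssNumRange_subset_add_of_isCompactOperator hK)).trans
        (interior_jointEssNumRange_subset_constDiag (T + K))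
  have constDiag_subset : ⋂ K ∈ 𝒦, constDiag (T + K) ⊆ ⋂ K ∈ 𝒦, jointNumRange (T + K) :=
    Set.iInter₂_mono fun K _ => constDiag_subset_jointNumRange (T + K)
  have jointNumRange_subset :
      ⋂ K ∈ 𝒦, jointNumRange (T + K) ⊆ interior (jointEssNumRange T) := by
    intro lam hlam
    by_contra hint
    obtain ⟨K, hK, hnot⟩ := exists_isCompactOperator_notMem_jointNumRange_add hdim hint
    exact hnot (Set.mem_iInter₂.1 hlam K hK)
  exact ⟨jointNumRange_subset.antisymm (interior_subset_constDiag.trans constDiag_subset),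
    (constDiag_subset.trans jointNumRange_subset).antisymm interior_subset_constDiag⟩
end

section
/- Let H be a complex separable infinite-dimensional Hilbert space and T a bounded operator on H with W_e(T) ⊇ closed unit disc. Then there exists a sequence (H_k)_{k≥1} of mutually orthogonal closed subspaces of H such that for every k the essential numerical range of the compression P_{H_k} T|_{H_k} (as an operator on H_k) contains the closed unit disc. -/
open Filter Metric
open scoped ComplexInnerProductSpace

/-- The essential numerical range of a bounded operator. -/
def essNumRange {H : Type*} [NormedAddCommGroup H] [InnerProductSpace ℂ H]
    (T : H →L[ℂ] H) : Set ℂ :=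
  {lam | ∃ x : ℕ → H, Orthonormal ℂ x ∧
    Tendsto (fun k => ⟪T (x k), x k⟫) atTop (nhds lam)}

/-- The essential numerical range of the compression `P_K T|_K` of `T` to a closed
subspace `K`: the set of `λ ∈ ℂ` for which there is an orthonormal sequence `(x_k)`
contained in `K` with `⟨T x_k, x_k⟩ → λ` (note that `⟨P_K T x, x⟩ = ⟨T x, x⟩` for
`x ∈ K`). -/
def essNumRangeCompression {H : Type*} [NormedAddCommGroup H] [InnerProductSpace ℂ H]
    (T : H →L[ℂ] H) (K : Submodule ℂ H) : Set ℂ :=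
  {lam | ∃ x : ℕ → H, Orthonormal ℂ x ∧ (∀ k, x k ∈ K) ∧
    Tendsto (fun k => ⟪T (x k), x k⟫) atTop (nhds lam)}

/-!
An orthonormal sequence tends weakly to zero, so its projections to a finite-dimensional subspace
tend to zero in norm. Hence every `λ ∈ W_e(T)` is approximated by `⟪T u, u⟫` for unit vectors `u`
orthogonal to any given finite set. Choosing such vectors one at a time gives an orthonormal family
indexed by `(k, d, m) ∈ ℕ × D × ℕ`, with `D` a countable dense subset of `W_e(T)`, in which the
vector at `(k, d, m)` approximates `d`, with errors tending to zero along the whole family. The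
closed span of the vectors with a fixed `k` is `H_k`: a point `λ = lim d_m` of `W_e(T)` is reached
along the indices `(k, d_m, m)`, where the last coordinate keeps the vectors distinct.
-/

open Submodule Topology

theorem exists_pairwise_of_forall_finset_exists {ι α : Type*} [Countable ι]
    (P : ι → α → Prop) (r : α → α → Prop) [Std.Symm r]
    (h : ∀ i (s : Finset α), ∃ y, P i y ∧ ∀ x ∈ s, r x y) :
    ∃ f : ι → α, (∀ i, P i (f i)) ∧ Pairwise (Function.onFun r f) := by
  classical
  have := Encodable.ofCountable ι
  choose g hgP hgr using h
  -- `F n` collects the values already chosen at the indices with code below `n`.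
  let F : ℕ → Finset α := Nat.rec ∅ fun n s =>
    (Encodable.decode n : Option ι).elim s fun i => insert (g i s) s
  let f : ι → α := fun i => g i (F (Encodable.encode i))
  have hF_mono : Monotone F := by
    refine monotone_nat_of_le_succ fun n => ?_
    change F n ≤ (Encodable.decode n : Option ι).elim (F n) fun i => insert (g i (F n)) (F n)
    cases (Encodable.decode n : Option ι) with
    | none => exact le_rfl
    | some i => exact Finset.subset_insert _ _
  have hf_mem (i : ι) : f i ∈ F (Encodable.encode i + 1) := by simp [F, f]
  have hf_lt (i j : ι) (hij : Encodable.encode i < Encodable.encode j) : r (f i) (f j) :=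
    hgr j _ _ (hF_mono hij (hf_mem i))
  refine ⟨f, fun i => hgP i _, fun i j hij => ?_⟩
  rcases (Encodable.encode_injective.ne hij).lt_or_gt with hlt | hgt
  · exact hf_lt i j hlt
  · exact symm (hf_lt j i hgt)

section InnerProductSpace

variable {𝕜 E ι : Type*} [RCLike 𝕜] [NormedAddCommGroup E] [InnerProductSpace 𝕜 E]

theorem isOrtho_topologicalClosure {U V : Submodule 𝕜 E} (h : U ⟂ V) :
    U.topologicalClosure ⟂ V.topologicalClosure := by
  rw [isOrtho_iff_le, orthogonal_closure]
  exact U.topologicalClosure_minimal h V.isClosed_orthogonal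

theorem tendsto_inner_cofinite_zero_of_orthonormal {x : ι → E} (hx : Orthonormal 𝕜 x) (v : E) :
    Tendsto (fun i => inner 𝕜 v (x i)) cofinite (𝓝 0) := by
  have hsq : Tendsto (fun i => ‖inner 𝕜 (x i) v‖ ^ 2) cofinite (𝓝 0) :=
    (hx.inner_products_summable (x := v)).tendsto_cofinite_zero
  rw [tendsto_zero_iff_norm_tendsto_zero]
  simpa [norm_inner_symm v] using hsq.sqrt

theorem tendsto_starProjection_cofinite_zero_of_orthonormal {x : ι → E} (hx : Orthonormal 𝕜 x)
    (F : Submodule 𝕜 E) [FiniteDimensional 𝕜 F] :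
    Tendsto (fun i => F.starProjection (x i)) cofinite (𝓝 0) := by
  let b := stdOrthonormalBasis 𝕜 F
  have hsum (i : ι) : F.starProjection (x i) = ∑ j, inner 𝕜 (b j : E) (x i) • (b j : E) := by
    simp [b.starProjection_eq_sum_rankOne]
  simp only [hsum]
  simpa using tendsto_finsetSum Finset.univ fun j _ =>
    (tendsto_inner_cofinite_zero_of_orthonormal hx (b j : E)).smul_const (b j : E)

theorem tendsto_inner_apply_self_sub_of_tendsto_sub (T : E →L[𝕜] E) {l : Filter ι} {x y : ι → E}
    (hx : IsBoundedUnder (· ≤ ·) l fun i => ‖x i‖) (hyx : Tendsto (fun i => y i - x i) l (𝓝 0)) :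
    Tendsto (fun i => inner 𝕜 (T (y i)) (y i) - inner 𝕜 (T (x i)) (x i)) l (𝓝 0) := by
  have hT : Tendsto (fun i => T (y i - x i)) l (𝓝 0) :=
    T.continuous.tendsto' 0 0 T.map_zero |>.comp hyx
  have h_diff_diff : Tendsto (fun i => inner 𝕜 (T (y i - x i)) (y i - x i)) l (𝓝 0) := by
    simpa only [inner_zero_left] using hT.inner (𝕜 := 𝕜) hyx
  have h_diff_self : Tendsto (fun i => inner 𝕜 (T (y i - x i)) (x i)) l (𝓝 0) :=
    hT.op_zero_isBoundedUnder_le hx _ norm_inner_le_norm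
  have h_self_diff : Tendsto (fun i => inner 𝕜 (T (x i)) (y i - x i)) l (𝓝 0) :=
    hyx.op_zero_isBoundedUnder_le' hx (fun v w => inner 𝕜 (T w) v) ⟨‖T‖, fun v w =>
      calc ‖inner 𝕜 (T w) v‖ ≤ ‖T w‖ * ‖v‖ := norm_inner_le_norm _ _
        _ ≤ ‖T‖ * ‖w‖ * ‖v‖ := by gcongr; exact T.le_opNorm w
        _ = ‖T‖ * ‖v‖ * ‖w‖ := by ring⟩
  have h_sum := (h_diff_diff.add h_diff_self).add h_self_diff
  simp only [add_zero] at h_sum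
  refine h_sum.congr fun i => ?_
  simp only [map_sub, inner_sub_left, inner_sub_right]
  ring

end InnerProductSpace

theorem norm_normalize_sub_le {V : Type*} [NormedAddCommGroup V] [NormedSpace ℝ V] {x : V}
    (hx : ‖x‖ = 1) (y : V) : ‖NormedSpace.normalize y - x‖ ≤ 2 * ‖y - x‖ := by
  have h_self : ‖NormedSpace.normalize y - y‖ ≤ ‖y - x‖ := by
    rcases eq_or_ne y 0 with rfl | hy
    · simp
    calc ‖NormedSpace.normalize y - y‖
        = ‖(1 - ‖y‖) • NormedSpace.normalize y‖ := by
          rw [sub_smul, one_smul, NormedSpace.norm_smul_normalize]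
      _ = |‖y‖ - ‖x‖| := by
          rw [norm_smul, NormedSpace.norm_normalize hy, mul_one, Real.norm_eq_abs, hx, abs_sub_comm]
      _ ≤ ‖y - x‖ := abs_norm_sub_norm_le y x
  calc ‖NormedSpace.normalize y - x‖
      ≤ ‖NormedSpace.normalize y - y‖ + ‖y - x‖ := norm_sub_le_norm_sub_add_norm_sub _ _ _
    _ ≤ 2 * ‖y - x‖ := by linarith

section EssNumRange

variable {H : Type*} [NormedAddCommGroup H] [InnerProductSpace ℂ H] {T : H →L[ℂ] H}

theorem essNumRangeCompression_subset_essNumRange (T : H →L[ℂ] H) (K : Submodule ℂ H) :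
    essNumRangeCompression T K ⊆ essNumRange T :=
  fun _ ⟨x, hx, _, hlim⟩ => ⟨x, hx, hlim⟩

theorem exists_mem_orthogonal_dist_inner_lt {lam : ℂ} (hlam : lam ∈ essNumRange T)
    (F : Submodule ℂ H) [FiniteDimensional ℂ F] {ε : ℝ} (hε : 0 < ε) :
    ∃ u ∈ Fᗮ, ‖u‖ = 1 ∧ dist ⟪T u, u⟫ lam < ε := by
  obtain ⟨x, hx, hlim⟩ := hlam
  let y (k : ℕ) : H := x k - F.starProjection (x k)
  let u (k : ℕ) : H := NormedSpace.normalize (y k)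
  have hyx : Tendsto (fun k => y k - x k) atTop (𝓝 0) := by
    simpa [y, Nat.cofinite_eq_atTop] using
      (tendsto_starProjection_cofinite_zero_of_orthonormal hx F).neg
  have hux : Tendsto (fun k => u k - x k) atTop (𝓝 0) :=
    squeeze_zero_norm (fun k => norm_normalize_sub_le (hx.1 k) (y k))
      (by simpa using hyx.norm.const_mul 2)
  have hx_bdd : IsBoundedUnder (· ≤ ·) atTop fun k => ‖x k‖ :=
    isBoundedUnder_of ⟨1, fun k => (hx.1 k).le⟩
  have hulim : Tendsto (fun k => ⟪T (u k), u k⟫) atTop (𝓝 lam) := by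
    simpa using (tendsto_inner_apply_self_sub_of_tendsto_sub T hx_bdd hux).add hlim
  have hy_ne : ∀ᶠ k in atTop, y k ≠ 0 := by
    filter_upwards [hyx.norm.eventually_lt_const (by simp : ‖(0 : H)‖ < 1)] with k hk hk0
    simp [hk0, hx.1 k] at hk
  obtain ⟨k, hk_ne, hk_dist⟩ := (hy_ne.and (Metric.tendsto_nhds.1 hulim ε hε)).exists
  have hyF : y k ∈ Fᗮ := F.sub_starProjection_mem_orthogonal (x k)
  exact ⟨u k, Fᗮ.smul_of_tower_mem _ hyF, NormedSpace.norm_normalize hk_ne, hk_dist⟩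

theorem exists_orthonormal_tendsto_inner_sub {ι : Type*} [Countable ι] {t : ι → ℂ}
    (ht : ∀ i, t i ∈ essNumRange T) :
    ∃ u : ι → H, Orthonormal ℂ u ∧
      Tendsto (fun i => ⟪T (u i), u i⟫ - t i) cofinite (𝓝 0) := by
  have := Encodable.ofCountable ι
  obtain ⟨ε, hε_pos, c, hε_sum, -⟩ := posSumOfEncodable one_pos ι
  have hstep (i : ι) (s : Finset H) :
      ∃ v, (‖v‖ = 1 ∧ dist ⟪T v, v⟫ (t i) < ε i) ∧ ∀ w ∈ s, ⟪w, v⟫ = 0 := by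
    obtain ⟨v, hv_orth, hv⟩ :=
      exists_mem_orthogonal_dist_inner_lt (ht i) (span ℂ (s : Set H)) (hε_pos i)
    exact ⟨v, hv, fun w hw => hv_orth w (subset_span hw)⟩
  have : Std.Symm fun v w : H => ⟪v, w⟫ = 0 := ⟨fun _ _ => inner_eq_zero_symm.1⟩
  obtain ⟨u, hu, hu_orth⟩ := exists_pairwise_of_forall_finset_exists _ _ hstep
  refine ⟨u, ⟨fun i => (hu i).1, hu_orth⟩, squeeze_zero_norm (fun i => ?_)
    hε_sum.summable.tendsto_cofinite_zero⟩
  exact (dist_eq_norm _ (t i)).symm.trans_le (hu i).2.le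

theorem closure_subset_essNumRangeCompression {s : Set ℂ} {K : Submodule ℂ H} {v : s × ℕ → H}
    (hv : Orthonormal ℂ v) (hvK : ∀ p, v p ∈ K)
    (hlim : Tendsto (fun p => ⟪T (v p), v p⟫ - (p.1 : ℂ)) cofinite (𝓝 0)) :
    closure s ⊆ essNumRangeCompression T K := by
  intro lam hlam
  obtain ⟨d, hds, hd⟩ := mem_closure_iff_seq_limit.1 hlam
  let N (m : ℕ) : s × ℕ := (⟨d m, hds m⟩, m)
  have hN : Function.Injective N := fun _ _ h => congrArg Prod.snd h
  have hlimN : Tendsto (fun m => ⟪T (v (N m)), v (N m)⟫ - d m) atTop (𝓝 0) := by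
    rw [← Nat.cofinite_eq_atTop]
    exact hlim.comp hN.tendsto_cofinite
  exact ⟨v ∘ N, hv.comp N hN, fun m => hvK (N m), by simpa using hlimN.add hd⟩

end EssNumRange

theorem stmt_16_general {H : Type*} [NormedAddCommGroup H] [InnerProductSpace ℂ H]
    (T : H →L[ℂ] H) :
    ∃ Hk : ℕ → Submodule ℂ H,
      (∀ k, IsClosed (Hk k : Set H)) ∧
      (∀ k l, k ≠ l → ∀ x ∈ Hk k, ∀ y ∈ Hk l, ⟪x, y⟫ = 0) ∧
      (∀ k, essNumRangeCompression T (Hk k) = essNumRange T) := by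
  obtain ⟨s, hsW, hs_count, hs_dense⟩ :=
    (TopologicalSpace.IsSeparable.of_separableSpace (essNumRange T)).exists_countable_dense_subset
  have : Countable s := hs_count.to_subtype
  obtain ⟨u, hu, hlim⟩ := exists_orthonormal_tendsto_inner_sub (T := T)
    (t := fun i : ℕ × s × ℕ => i.2.1) fun i => hsW i.2.1.2
  let B (k : ℕ) : Set H := Set.range fun p => u (k, p)
  refine ⟨fun k => (span ℂ (B k)).topologicalClosure,
    fun k => isClosed_topologicalClosure _, fun k l hkl => ?_, fun k => ?_⟩
  · have hB : span ℂ (B k) ⟂ span ℂ (B l) := by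
      rw [isOrtho_span]
      rintro _ ⟨p, rfl⟩ _ ⟨q, rfl⟩
      exact hu.2 fun h => hkl (congrArg Prod.fst h)
    exact isOrtho_iff_inner_eq.1 (isOrtho_topologicalClosure hB)
  · have hinj : Function.Injective (Prod.mk k : s × ℕ → ℕ × s × ℕ) := Prod.mk_right_injective k
    exact (essNumRangeCompression_subset_essNumRange T _).antisymm <| hs_dense.trans <|
      closure_subset_essNumRangeCompression (hu.comp _ hinj)
        (fun p => le_topologicalClosure _ (subset_span ⟨p, rfl⟩))
        (hlim.comp hinj.tendsto_cofinite)

/-- If `W_e(T) ⊇ 𝔻̄`, then there are mutually orthogonal closed subspaces `H_k ⊂ H`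
such that the essential numerical range of each compression `P_{H_k} T|_{H_k}`
still contains the closed unit disc. -/
theorem stmt_16 {H : Type*} [NormedAddCommGroup H] [InnerProductSpace ℂ H]
    [CompleteSpace H] [TopologicalSpace.SeparableSpace H]
    (hdim : ¬ FiniteDimensional ℂ H)
    (T : H →L[ℂ] H) (hWe : Metric.closedBall (0 : ℂ) 1 ⊆ essNumRange T) :
    ∃ Hk : ℕ → Submodule ℂ H,
      (∀ k, IsClosed (Hk k : Set H)) ∧
      (∀ k l, k ≠ l → ∀ x ∈ Hk k, ∀ y ∈ Hk l, ⟪x, y⟫ = 0) ∧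
      (∀ k, Metric.closedBall (0 : ℂ) 1 ⊆ essNumRangeCompression T (Hk k)) := by
  obtain ⟨Hk, hclosed, horth, hrange⟩ := stmt_16_general T
  exact ⟨Hk, hclosed, horth, fun k => hWe.trans_eq (hrange k).symm⟩
end
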